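/- Let α be a partition with all parts at least 2 and ℓ(α) ≥ 3, and let R_α be the connected ribbon with row lengths α. If α has full equivalence class, then R_α has full Schur support, i.e. [R_α] = [α, (|α|−ℓ(α)+1, ℓ(α)−1)] in dominance order. Moreover, when ℓ(α) ≤ 4, α has full equivalence class if and only if R_α has full Schur support. -/

import Mathlib

namespace RibbonSupport

/-- A partition: a weakly decreasing list of positive integers. -/
def IsPartition (a : List ℕ) : Prop := a.Pairwise (· ≥ ·) ∧ ∀ x ∈ a, 0 < x

/-- All parts of the list are at least `m`. -/
def PartsGE (a : List ℕ) (m : ℕ) : Prop := ∀ x ∈ a, m ≤ x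

/-- Dominance order `lam ⪯ mu` on partitions of the same size. -/
def DomLE (lam mu : List ℕ) : Prop :=
  lam.sum = mu.sum ∧ ∀ i, (lam.take i).sum ≤ (mu.take i).sum

/-- The number of nonzero parts. -/
def lenp (p : List ℕ) : ℕ := p.countP (fun x => decide (x ≠ 0))

/-- `p` is an overlapping partition for the monotone ribbon with row lengths `a`:
`p` has the same length as `a`, its last entry is `0`, and consecutive entries
decrease by `0` or `1`. -/
def IsOverlapSeq (a p : List ℕ) : Prop :=
  p.length = a.length ∧ p.getD (a.length - 1) 0 = 0 ∧
    ∀ i, i + 1 < a.length →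
      p.getD i 0 = p.getD (i + 1) 0 ∨ p.getD i 0 = p.getD (i + 1) 0 + 1

/-- Rows `i` and `i+1` (0-based, top to bottom) of `R_a^p` overlap
(share exactly one column) exactly when `p_i = p_{i+1} + 1`. -/
def ovOf (p : List ℕ) : ℕ → Bool := fun i => decide (p.getD i 0 = p.getD (i + 1) 0 + 1)

def rowOffset (a : List ℕ) (i : ℕ) : ℕ := (a.take i).sum

/-- `w` is the reading word (rows right-to-left, top to bottom) of a semistandard filling of
the ribbon with row lengths `a` (top to bottom) in which consecutive rows `i`, `i+1` share
exactly one column when `ov i = true` and no column otherwise.  Semistandardness amounts to: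
within each row block the word is weakly decreasing (rows weakly increase left to right), and
at each overlapping gap the word strictly increases (columns strictly increase downwards). -/
def IsRibbonWord (a : List ℕ) (ov : ℕ → Bool) (w : List ℕ) : Prop :=
  w.length = a.sum ∧
  (∀ i j, i < a.length → j + 1 < a.getD i 0 →
    w.getD (rowOffset a i + j + 1) 0 ≤ w.getD (rowOffset a i + j) 0) ∧
  (∀ i, i + 1 < a.length → ov i = true →
    w.getD (rowOffset a (i + 1) - 1) 0 < w.getD (rowOffset a (i + 1)) 0)

/-- Yamanouchi (lattice) word: each prefix has at least as many letters `j` as `j+1`. -/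
def IsYam (w : List ℕ) : Prop := ∀ k j, (w.take k).count (j + 2) ≤ (w.take k).count (j + 1)

/-- The word `w` has content `nu` (and only positive letters). -/
def HasContent (w : List ℕ) (nu : List ℕ) : Prop :=
  (∀ j, w.count (j + 1) = nu.getD j 0) ∧ w.count 0 = 0

/-- There is an LR filling of the ribbon `(a, ov)` with content `nu`. -/
def InSupportOv (a : List ℕ) (ov : ℕ → Bool) (nu : List ℕ) : Prop :=
  ∃ w : List ℕ, IsRibbonWord a ov w ∧ IsYam w ∧ HasContent w nu

/-- `nu` is in the Schur support of the monotone ribbon `R_a^p`. -/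
def InSupport (a p nu : List ℕ) : Prop := InSupportOv a (ovOf p) nu

/-- `nu` is in the Schur support of the connected ribbon `R_a`. -/
def InSupportConn (a nu : List ℕ) : Prop := InSupportOv a (fun _ => true) nu

/-- `nu` belongs to the Schur interval `[a, (|a| - p₁, p₁)]` in dominance order. -/
def InInterval (a p nu : List ℕ) : Prop :=
  DomLE a nu ∧ DomLE nu [a.sum - p.getD 0 0, p.getD 0 0]

/-- The Schur support of `R_a^p`, as a set of partitions. -/
def SupportSet (a p : List ℕ) : Set (List ℕ) := {nu | IsPartition nu ∧ InSupport a p nu}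

/-- The Schur interval of `R_a^p`, as a set of partitions. -/
def IntervalSet (a p : List ℕ) : Set (List ℕ) := {nu | IsPartition nu ∧ InInterval a p nu}

/-- `R_a^p` has full Schur support. -/
def FullSupport (a p : List ℕ) : Prop := SupportSet a p = IntervalSet a p

/-- The Schur support of the connected ribbon `R_a`, as a set of partitions. -/
def SupportSetConn (a : List ℕ) : Set (List ℕ) := {nu | IsPartition nu ∧ InSupportConn a nu}

/-- `ϱ_i` (1-based `i`): `Σ_{q=i+1}^{ℓ(a)} a_q − p_{i+1} + 1`. -/
def rho (a p : List ℕ) (i : ℕ) : ℕ := (a.drop i).sum + 1 - p.getD i 0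

/-- Entry `j` (1-based) of the `i`-witness vector: `[ϱ_i − a_j]₊`. -/
def wit (a p : List ℕ) (i j : ℕ) : ℕ := rho a p i - a.getD (j - 1) 0

/-- Size of the `i`-witness vector. -/
def witSize (a p : List ℕ) (i : ℕ) : ℕ := ∑ j ∈ Finset.Icc 1 i, wit a p i j

/-! ### Tableaux -/

/-- Cells (0-based `(row, column)`) of the Young diagram of `lam`. -/
def cells (lam : List ℕ) : Finset (ℕ × ℕ) :=
  (Finset.range lam.length ×ˢ Finset.range (lam.sum + 1)).filter
    (fun x => x.2 < lam.getD x.1 0)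

/-- `T` is a semistandard Young tableau of shape `lam` and content `al`
(normalized to vanish off the diagram). -/
def IsTab (lam al : List ℕ) (T : ℕ × ℕ → ℕ) : Prop :=
  (∀ x, x ∉ cells lam → T x = 0) ∧
  (∀ x ∈ cells lam, 1 ≤ T x) ∧
  (∀ i c, (i, c + 1) ∈ cells lam → T (i, c) ≤ T (i, c + 1)) ∧
  (∀ i c, (i + 1, c) ∈ cells lam → T (i, c) < T (i + 1, c)) ∧
  (∀ k, ((cells lam).filter (fun x => T x = k + 1)).card = al.getD k 0)

/-- Standardization of a tableau: entries are renumbered `1, …, N` in increasing order of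
value, entries of equal value being numbered from southwest to northeast (by column). -/
def stdz (lam : List ℕ) (T : ℕ × ℕ → ℕ) : ℕ × ℕ → ℕ := fun x =>
  if x ∈ cells lam then
    ((cells lam).filter (fun y => T y < T x ∨ (T y = T x ∧ y.2 < x.2))).card + 1
  else 0

/-- `n` is a descent of the standard tableau `U`: the entry `n+1` lies in a strictly
lower row than the entry `n`. -/
def IsDescent (lam : List ℕ) (U : ℕ × ℕ → ℕ) (n : ℕ) : Prop :=
  ∃ x ∈ cells lam, ∃ y ∈ cells lam, U x = n ∧ U y = n + 1 ∧ x.1 < y.1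

/-- `S(al)`: the set of proper partial sums of the composition `al`. -/
def Sset (al : List ℕ) : Set ℕ := {n | ∃ k, 0 < k ∧ k < al.length ∧ n = (al.take k).sum}

/-- `s ∈ D(T)`: some entry `s+1` of `T` lies in a strictly lower row than some entry `s`. -/
def TabDescent (lam : List ℕ) (T : ℕ × ℕ → ℕ) (s : ℕ) : Prop :=
  ∃ x ∈ cells lam, ∃ y ∈ cells lam, T x = s ∧ T y = s + 1 ∧ x.1 < y.1

/-- The word `w_{T̂}` of `T`: its `u`-th letter (1-based) is the 1-based row index of the
entry `u` of the standardization `T̂` of `T`. -/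
def wordOf (lam : List ℕ) (T : ℕ × ℕ → ℕ) : List ℕ :=
  (List.range lam.sum).map fun n =>
    ∑ x ∈ (cells lam).filter (fun x => stdz lam T x = n + 1), (x.1 + 1)

/-- `j ∈ {2, …, ℓ(al)}` is a critical number of `T ∈ Tab(lam, al)`:
`w_{α_1+⋯+α_{j-1}} = w_{α_1+⋯+α_{j-1}+1}` in the word of `T`. -/
def CriticalNum (lam al : List ℕ) (T : ℕ × ℕ → ℕ) (j : ℕ) : Prop :=
  2 ≤ j ∧ j ≤ al.length ∧
    (wordOf lam T).getD ((al.take (j - 1)).sum - 1) 0 =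
      (wordOf lam T).getD ((al.take (j - 1)).sum) 0

/-- `j ∈ {2, …, ℓ(al)}` is a negligible critical number of `T`:
`w_{α_1+⋯+α_{j-1}} > w_{α_1+⋯+α_{j-1}+1}` in the word of `T`. -/
def NegligibleNum (lam al : List ℕ) (T : ℕ × ℕ → ℕ) (j : ℕ) : Prop :=
  2 ≤ j ∧ j ≤ al.length ∧
    (wordOf lam T).getD ((al.take (j - 1)).sum) 0 <
      (wordOf lam T).getD ((al.take (j - 1)).sum - 1) 0

/-- The overlapping partition of the ribbon encoded by its gap pattern `b`
(`b j = true` iff rows `j` and `j+1`, 0-based, overlap). -/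
def povOf (b : List Bool) : List ℕ :=
  (List.range (b.length + 1)).map fun i => (b.drop i).count true

/-! ### Connected ribbons with rows in arbitrary order -/

/-- Starting column (0-based) of row `i` of the connected ribbon with row lengths `b`. -/
def startConn (b : List ℕ) (i : ℕ) : ℕ := (b.drop (i + 1)).sum + (i + 1) - b.length

/-- Number of columns of the connected ribbon with row lengths `b`. -/
def ncols (b : List ℕ) : ℕ := b.sum + 1 - b.length

/-- Length of column `c` of the connected ribbon with row lengths `b`. -/
def colLen (b : List ℕ) (c : ℕ) : ℕ :=
  ((Finset.range b.length).filter
    (fun i => startConn b i ≤ c ∧ c < startConn b i + b.getD i 0)).card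

/-- Deletion rank of row `j`: the number of rows deleted strictly before row `j` when one
repeatedly deletes a longest remaining row in highest (most northern) position. -/
def delRank (g : List ℕ) (j : ℕ) : ℕ :=
  ((Finset.range g.length).filter
    (fun j' => g.getD j 0 < g.getD j' 0 ∨ (g.getD j' 0 = g.getD j 0 ∧ j' < j))).card

/-- The overlapping partition of the connected ribbon with row lengths `g`:
its `(d+1)`-st entry is the number of length-two columns of the ribbon remaining
after deleting `d` rows as above, i.e. the number of adjacent pairs of surviving rows. -/
def ppiList (g : List ℕ) : List ℕ :=
  (List.range g.length).map fun d =>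
    ((Finset.range (g.length - 1)).filter
      (fun j => d ≤ delRank g j ∧ d ≤ delRank g (j + 1))).card


/-- The connected ribbon `R_a` has full Schur support
`[a, (|a|−ℓ(a)+1, ℓ(a)−1)]` in dominance order. -/
def FullSupportConn (a : List ℕ) : Prop :=
  SupportSetConn a =
    {nu | IsPartition nu ∧ DomLE a nu ∧ DomLE nu [a.sum - (a.length - 1), a.length - 1]}

/-- `a` has full equivalence class: every rearrangement of the rows of the connected ribbon
`R_a` has the same Schur support. -/
def FullEquivClass (a : List ℕ) : Prop :=
  ∀ b : List ℕ, b.Perm a → SupportSetConn b = SupportSetConn a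

/-!
Cutting an LR filling of a connected ribbon into its rows turns it into a chain of horizontal
strips, one for each row, in which the lowest row of each strip lies strictly below the top row of
the preceding one. The overlaps cap every row of the content `nu`, not only the first: row `i`
satisfies `nu i ≤ α i + ⋯ + α (l - 1) - (l - i - 1)`, rows being numbered from `0`. For a
partition `α` with parts at least `2`, removing strips one at a time shows that `nu` lies in the
support as soon as it dominates `α` and respects all caps. Hence `R_α` has full support exactly
when every shape in the dominance interval respects all caps.

If some shape in the interval exceeds the cap of row `p + 1`, then so does a shape that becomes
reachable once rows `p` and `p + 1` of the ribbon are interchanged, and the equivalence class of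
`α` is not full. Conversely, for at most four rows, full support forces a few linear inequalities
on the row lengths that do not depend on their order, and these allow a chain to be built for
every arrangement.
-/

open Finset

/-! ### LR words and chains of horizontal strips -/

section Words

variable {a u w : List ℕ} {x : ℕ}

lemma rowOffset_length (a : List ℕ) : rowOffset a a.length = a.sum := by
  simp [rowOffset]

lemma rowOffset_succ {i : ℕ} (hi : i < a.length) :
    rowOffset a (i + 1) = rowOffset a i + a.getD i 0 := by
  rw [rowOffset, rowOffset, List.sum_take_succ _ _ hi, List.getD_eq_getElem _ _ hi]

lemma rowOffset_le_sum (a : List ℕ) (i : ℕ) : rowOffset a i ≤ a.sum :=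
  (Nat.le_add_right _ _).trans (List.sum_take_add_sum_drop a i).le

lemma rowOffset_append {i : ℕ} (hi : i ≤ a.length) :
    rowOffset (a ++ u) i = rowOffset a i := by
  rw [rowOffset, rowOffset, List.take_append_of_le_length hi]

lemma getD_append_rowOffset (hw : w.length = a.sum) {i j : ℕ} (hi : i < a.length)
    (hj : j < a.getD i 0) : (w ++ u).getD (rowOffset a i + j) 0 = w.getD (rowOffset a i + j) 0 := by
  have := rowOffset_succ hi
  have := rowOffset_le_sum a (i + 1)
  exact List.getD_append _ _ _ _ (by omega)

lemma getD_append_sum_add (hw : w.length = a.sum) (j : ℕ) :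
    (w ++ u).getD (a.sum + j) 0 = u.getD j 0 := by
  rw [List.getD_append_right _ _ _ _ (by omega), hw, Nat.add_sub_cancel_left]

lemma getD_concat_length (a : List ℕ) (x : ℕ) : (a ++ [x]).getD a.length 0 = x := by
  simp

lemma forall_getD_succ_le_iff_pairwise :
    (∀ j, j + 1 < u.length → u.getD (j + 1) 0 ≤ u.getD j 0) ↔ u.Pairwise (· ≥ ·) := by
  rw [← List.isChain_iff_pairwise, List.isChain_iff_getElem]
  refine forall₂_congr fun j hj => ?_
  rw [List.getD_eq_getElem _ _ hj, List.getD_eq_getElem _ _ (by omega)]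

lemma getLastD_eq_getD_length_sub_one (w : List ℕ) :
    w.getLastD 0 = w.getD (w.length - 1) 0 := by
  rw [List.getLastD_eq_getLast?, List.getLast?_eq_getElem?, List.getD_eq_getElem?_getD]

lemma rows_concat_iff (hw : w.length = a.sum) (hu : u.length = x) :
    (∀ i j, i < (a ++ [x]).length → j + 1 < (a ++ [x]).getD i 0 →
      (w ++ u).getD (rowOffset (a ++ [x]) i + j + 1) 0 ≤
        (w ++ u).getD (rowOffset (a ++ [x]) i + j) 0) ↔
    (∀ i j, i < a.length → j + 1 < a.getD i 0 →
      w.getD (rowOffset a i + j + 1) 0 ≤ w.getD (rowOffset a i + j) 0) ∧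
    u.Pairwise (· ≥ ·) := by
  have old {i j : ℕ} (hi : i < a.length) (hj : j + 1 < a.getD i 0) :
      ((w ++ u).getD (rowOffset (a ++ [x]) i + j + 1) 0 ≤
        (w ++ u).getD (rowOffset (a ++ [x]) i + j) 0) ↔
      w.getD (rowOffset a i + j + 1) 0 ≤ w.getD (rowOffset a i + j) 0 := by
    rw [rowOffset_append hi.le, add_assoc, getD_append_rowOffset hw hi hj,
      getD_append_rowOffset hw hi (by omega)]
  have new (j : ℕ) : ((w ++ u).getD (rowOffset (a ++ [x]) a.length + j + 1) 0 ≤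
        (w ++ u).getD (rowOffset (a ++ [x]) a.length + j) 0) ↔ u.getD (j + 1) 0 ≤ u.getD j 0 := by
    rw [rowOffset_append le_rfl, rowOffset_length, add_assoc, getD_append_sum_add hw,
      getD_append_sum_add hw]
  simp only [List.length_append, List.length_singleton, ← forall_getD_succ_le_iff_pairwise]
  refine ⟨fun h => ⟨fun i j hi hj => (old hi hj).1 (h i j (by omega) ?_), fun j hj =>
    (new j).1 (h _ j (by omega) ?_)⟩, fun ⟨h, h'⟩ i j hi hj => ?_⟩
  · rwa [List.getD_append _ _ _ _ hi]
  · rwa [getD_concat_length, ← hu]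
  · rcases Nat.lt_succ_iff_lt_or_eq.1 hi with hi | rfl
    · rw [List.getD_append _ _ _ _ hi] at hj
      exact (old hi hj).2 (h i j hi hj)
    · rw [getD_concat_length, ← hu] at hj
      exact (new j).2 (h' j hj)

lemma columns_concat_iff (ha : ∀ y ∈ a, 0 < y) (hw : w.length = a.sum) :
    (∀ i, i + 1 < (a ++ [x]).length →
      (w ++ u).getD (rowOffset (a ++ [x]) (i + 1) - 1) 0 <
        (w ++ u).getD (rowOffset (a ++ [x]) (i + 1)) 0) ↔
    (∀ i, i + 1 < a.length →
      w.getD (rowOffset a (i + 1) - 1) 0 < w.getD (rowOffset a (i + 1)) 0) ∧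
    (a ≠ [] → w.getLastD 0 < u.getD 0 0) := by
  have pos {i : ℕ} (hi : i < a.length) : 0 < a.getD i 0 := by
    rw [List.getD_eq_getElem _ _ hi]
    exact ha _ (List.getElem_mem hi)
  have row_end {i : ℕ} (hi : i < a.length) :
      (w ++ u).getD (rowOffset (a ++ [x]) (i + 1) - 1) 0 = w.getD (rowOffset a (i + 1) - 1) 0 := by
    have := pos hi
    rw [rowOffset_append hi, rowOffset_succ hi, Nat.add_sub_assoc this,
      getD_append_rowOffset hw hi (by omega)]
  have row_start {i : ℕ} (hi : i < a.length) :
      (w ++ u).getD (rowOffset (a ++ [x]) i) 0 = w.getD (rowOffset a i) 0 := by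
    rw [rowOffset_append hi.le]
    exact getD_append_rowOffset hw hi (pos hi)
  have last_start : (w ++ u).getD (rowOffset (a ++ [x]) a.length) 0 = u.getD 0 0 := by
    rw [rowOffset_append le_rfl, rowOffset_length]
    exact getD_append_sum_add hw 0
  simp only [List.length_append, List.length_singleton]
  rw [getLastD_eq_getD_length_sub_one, hw, ← rowOffset_length]
  refine ⟨fun h => ⟨fun i hi => ?_, fun hne => ?_⟩, fun ⟨h, h'⟩ i hi => ?_⟩
  · rw [← row_end (by omega), ← row_start hi]
    exact h i (by omega)
  · obtain ⟨i, hi⟩ := Nat.exists_eq_succ_of_ne_zero (List.length_eq_zero_iff.not.2 hne)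
    rw [← last_start, hi, ← row_end (by omega)]
    exact h i (by omega)
  · rw [row_end (by omega)]
    rcases Nat.lt_succ_iff_lt_or_eq.1 hi with hi | hi
    · rw [row_start hi]
      exact h i hi
    · rw [hi, last_start]
      exact h' (by rintro rfl; simp at hi)

lemma isRibbonWord_concat_iff (ha : ∀ y ∈ a, 0 < y) (hw : w.length = a.sum) (hu : u.length = x) :
    IsRibbonWord (a ++ [x]) (fun _ => true) (w ++ u) ↔
      IsRibbonWord a (fun _ => true) w ∧ u.Pairwise (· ≥ ·) ∧
        (a ≠ [] → w.getLastD 0 < u.getD 0 0) := by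
  have hlen : (w ++ u).length = (a ++ [x]).sum := by simp [hw, hu]
  have hrows := rows_concat_iff hw hu
  have hcolumns := columns_concat_iff (u := u) (x := x) ha hw
  simp only [IsRibbonWord, forall_const]
  tauto

lemma exists_take_count_of_pairwise (hu : u.Pairwise (· ≥ ·)) (c : ℕ) :
    ∃ k, (u.take k).count c = u.count c ∧ ∀ d < c, (u.take k).count d = 0 := by
  induction u with
  | nil => exact ⟨0, rfl, fun _ _ => rfl⟩
  | cons y u ih =>
    rw [List.pairwise_cons] at hu
    rcases lt_or_ge y c with hy | hy
    · refine ⟨0, (List.count_eq_zero.2 fun hc => ?_).symm, fun _ _ => rfl⟩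
      rcases List.mem_cons.1 hc with rfl | hc
      · exact lt_irrefl _ hy
      · exact absurd (hu.1 c hc) (by omega)
    · obtain ⟨k, hk, hk'⟩ := ih hu.2
      refine ⟨k + 1, by simp [List.count_cons, hk], fun d hd => ?_⟩
      simp [hk' d hd, show y ≠ d by omega]

/-- The critical prefixes of `w ++ u` stop just before the letters `j + 1` of the decreasing
word `u`. -/
lemma isYam_append_iff (hu : u.Pairwise (· ≥ ·)) :
    IsYam (w ++ u) ↔
      IsYam w ∧ ∀ j, w.count (j + 2) + u.count (j + 2) ≤ w.count (j + 1) := by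
  constructor
  · refine fun h => ⟨fun k j => ?_, fun j => ?_⟩
    · have := h (min k w.length) j
      rwa [List.take_append_of_le_length (min_le_right _ _), ← List.take_eq_take_min] at this
    · obtain ⟨k, hk, hk'⟩ := exists_take_count_of_pairwise hu (j + 2)
      simpa [List.take_length_add_append, hk, hk'] using h (w.length + k) j
  · rintro ⟨hw, h⟩ k j
    rcases le_total k w.length with hk | hk
    · rw [List.take_append_of_le_length hk]
      exact hw k j
    · obtain ⟨k, rfl⟩ := Nat.exists_eq_add_of_le hk
      rw [List.take_length_add_append, List.count_append, List.count_append]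
      have := (List.take_sublist k u).count_le (j + 2)
      have := h j
      omega

lemma exists_pairwise_count (h : ℕ → ℕ) (n : ℕ) :
    ∃ u : List ℕ, u.Pairwise (· ≥ ·) ∧ u.length = ∑ r ∈ range n, h r ∧ u.count 0 = 0 ∧
      ∀ r, u.count (r + 1) = if r < n then h r else 0 := by
  set s : Multiset ℕ := ∑ r ∈ range n, Multiset.replicate (h r) (r + 1) with hs
  refine ⟨s.sort (· ≥ ·), s.pairwise_sort _, ?_, ?_, fun r => ?_⟩ <;>
    simp only [← Multiset.coe_card, ← Multiset.coe_count, Multiset.sort_eq]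
  · simp [hs]
  · simp [hs, Multiset.count_sum', Multiset.count_replicate]
  · simp [hs, Multiset.count_sum', Multiset.count_replicate, Finset.sum_ite_eq']

lemma sum_count_eq_length {n : ℕ} (hn : ∀ y ∈ w, y < n) :
    ∑ r ∈ range n, w.count r = w.length := by
  have : w.toFinset ⊆ range n := fun y hy => by simpa using hn y (by simpa using hy)
  rw [← List.sum_toFinset_count_eq_length]
  refine (Finset.sum_subset this fun y _ hy => ?_).symm
  rwa [List.count_eq_zero, ← List.mem_toFinset]

end Words

section Chains

/-- The parts of a list as a function on `ℕ`, extended by zero. -/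
def part (a : List ℕ) (r : ℕ) : ℕ := a.getD r 0

/-- The skew shape `nu / la` is a horizontal strip, for shapes given by their row lengths. -/
structure IsHorizontalStrip (la nu : ℕ → ℕ) : Prop where
  le : ∀ r, la r ≤ nu r
  interlace : ∀ r, nu (r + 1) ≤ la r

/-- The shape `nu` is reached from `∅` by adding, for each entry of `a` in turn, a horizontal
strip of that size whose lowest row lies weakly below the top row `c` of the previous strip
incremented by one; the top row `c` of the last strip satisfies `c < t`. -/
inductive StripChain : List ℕ → (ℕ → ℕ) → ℕ → Prop
  | nil (t : ℕ) : StripChain [] 0 t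
  | snoc {a : List ℕ} {x : ℕ} {la nu : ℕ → ℕ} {s t : ℕ} (chain : StripChain a la s)
      (strip : IsHorizontalStrip la nu)
      (sum_eq : ∑ r ∈ range (a.length + 1), nu r = a.sum + x)
      (exists_ge : ∃ b, s ≤ b ∧ la b < nu b) (exists_lt : ∃ c, c < t ∧ la c < nu c) :
      StripChain (a ++ [x]) nu t

/-- `w` is the reading word of an LR filling of the connected ribbon `R_a` with content `nu`. -/
structure IsLRWord (a : List ℕ) (nu : ℕ → ℕ) (w : List ℕ) : Prop where
  ribbon : IsRibbonWord a (fun _ => true) w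
  yam : IsYam w
  count_succ : ∀ r, w.count (r + 1) = nu r
  count_zero : w.count 0 = 0

namespace StripChain

variable {a : List ℕ} {nu : ℕ → ℕ} {t : ℕ}

lemma eq_zero (h : StripChain a nu t) {r : ℕ} (hr : a.length ≤ r) : nu r = 0 := by
  induction h generalizing r with
  | nil => rfl
  | snoc _ strip _ _ _ ih =>
    obtain ⟨r, rfl⟩ := Nat.exists_eq_add_of_lt (m := 0) (n := r) (by simp at hr; omega)
    have := strip.interlace r
    rw [ih (by simp at hr; omega)] at this
    simpa using this

lemma sum_eq_of_le (h : StripChain a nu t) {N : ℕ} (hN : a.length ≤ N) :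
    ∑ r ∈ range N, nu r = a.sum := by
  have base : ∑ r ∈ range a.length, nu r = a.sum := by
    cases h with
    | nil => rfl
    | snoc chain strip sum_eq => simpa using sum_eq
  rw [← base]
  refine (sum_subset (range_subset_range.2 hN) fun r _ hr => h.eq_zero ?_).symm
  simpa using hr

end StripChain

namespace IsLRWord

lemma nil : IsLRWord [] 0 [] :=
  ⟨⟨rfl, by simp, by simp⟩, fun k j => by simp, fun _ => by simp, by simp⟩

variable {a u w : List ℕ} {la nu : ℕ → ℕ} {x : ℕ}

lemma concat (ha : ∀ y ∈ a, 0 < y) (hw : IsLRWord a la w) (strip : IsHorizontalStrip la nu)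
    (hu : u.Pairwise (· ≥ ·)) (hx : u.length = x) (hu0 : u.count 0 = 0)
    (hcount : ∀ r, la r + u.count (r + 1) = nu r) (hlast : w.getLastD 0 < u.getD 0 0) :
    IsLRWord (a ++ [x]) nu (w ++ u) where
  ribbon := (isRibbonWord_concat_iff ha hw.ribbon.1 hx).2 ⟨hw.ribbon, hu, fun _ => hlast⟩
  yam := by
    refine (isYam_append_iff hu).2 ⟨hw.yam, fun j => ?_⟩
    rw [hw.count_succ, hw.count_succ, hcount]
    exact strip.interlace j
  count_succ r := by rw [List.count_append, hw.count_succ, hcount]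
  count_zero := by rw [List.count_append, hw.count_zero, hu0]

lemma exists_append (ha : ∀ y ∈ a, 0 < y) (h : IsLRWord (a ++ [x]) nu w) :
    ∃ la w₁ u, w = w₁ ++ u ∧ IsLRWord a la w₁ ∧ IsHorizontalStrip la nu ∧ u.length = x ∧
      u.Pairwise (· ≥ ·) ∧ u.count 0 = 0 ∧ (∀ r, la r + u.count (r + 1) = nu r) ∧
      (a ≠ [] → w₁.getLastD 0 < u.getD 0 0) := by
  have hlen : w.length = a.sum + x := by simpa using h.ribbon.1
  obtain ⟨w₁, u, rfl, hw₁⟩ : ∃ w₁ u, w = w₁ ++ u ∧ w₁.length = a.sum :=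
    ⟨w.take a.sum, w.drop a.sum, (List.take_append_drop _ _).symm, by simp; omega⟩
  have hu : u.length = x := by simp at hlen; omega
  obtain ⟨ribbon, sorted, hlast⟩ := (isRibbonWord_concat_iff ha hw₁ hu).1 h.ribbon
  obtain ⟨yam, hyam⟩ := (isYam_append_iff sorted).1 h.yam
  have count_zero : w₁.count 0 + u.count 0 = 0 := by simpa using h.count_zero
  have count_succ (r : ℕ) : w₁.count (r + 1) + u.count (r + 1) = nu r := by
    simpa using h.count_succ r
  refine ⟨fun r => w₁.count (r + 1), w₁, u, rfl, ⟨ribbon, yam, fun _ => rfl, by omega⟩,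
    ⟨fun r => ?_, fun r => ?_⟩, hu, sorted, by omega, count_succ, hlast⟩
  · exact (Nat.le_add_right _ _).trans (count_succ r).le
  · exact (count_succ (r + 1)).symm.trans_le (hyam r)

end IsLRWord

lemma le_getD_zero_of_mem {u : List ℕ} (hu : u.Pairwise (· ≥ ·)) {y : ℕ} (hy : y ∈ u) :
    y ≤ u.getD 0 0 := by
  cases u with
  | nil => simp at hy
  | cons z u =>
    rcases List.mem_cons.1 hy with rfl | hy
    · rfl
    · exact (List.pairwise_cons.1 hu).1 y hy

lemma getLastD_le_of_mem {u : List ℕ} (hu : u.Pairwise (· ≥ ·)) {y : ℕ} (hy : y ∈ u) :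
    u.getLastD 0 ≤ y := by
  rw [List.getLastD_eq_getLast?, List.getLast?_eq_some_getLast (List.ne_nil_of_mem hy)]
  exact hu.rel_getLast hy

lemma StripChain.concat_of_letters {a u : List ℕ} {la nu : ℕ → ℕ} {s : ℕ}
    (chain : StripChain a la s) (strip : IsHorizontalStrip la nu) (hu : u ≠ [])
    (hu0 : u.count 0 = 0) (hcount : ∀ r, la r + u.count (r + 1) = nu r)
    (hs : s < u.getD 0 0) : StripChain (a ++ [u.length]) nu (u.getLastD 0) := by
  have bump {y : ℕ} (hy : y ∈ u) : ∃ r, y = r + 1 ∧ la r < nu r := by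
    have hy0 : y ≠ 0 := by
      rintro rfl
      exact List.count_eq_zero.1 hu0 hy
    obtain ⟨r, rfl⟩ := Nat.exists_eq_add_one_of_ne_zero hy0
    refine ⟨r, rfl, ?_⟩
    have := List.count_pos_iff.2 hy
    have := hcount r
    omega
  have letter_lt {y : ℕ} (hy : y ∈ u) : y < a.length + 2 := by
    obtain ⟨r, rfl, hr⟩ := bump hy
    by_contra hlt
    obtain ⟨r, rfl⟩ := Nat.exists_eq_add_one_of_ne_zero (n := r) (by omega)
    have := strip.interlace r
    rw [chain.eq_zero (by omega)] at this
    omega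
  have sum_count := sum_count_eq_length fun y => letter_lt (y := y)
  rw [sum_range_succ', hu0, add_zero] at sum_count
  refine snoc chain strip ?_ ?_ ?_
  · rw [← sum_count, ← chain.sum_eq_of_le (Nat.le_succ _), ← sum_add_distrib]
    exact sum_congr rfl fun r _ => (hcount r).symm
  · have hmem : u.getD 0 0 ∈ u := by
      rw [List.getD_eq_getElem _ _ (List.length_pos_iff.2 hu)]
      exact List.getElem_mem _
    obtain ⟨b, hb, hlt⟩ := bump hmem
    exact ⟨b, by omega, hlt⟩
  · have hmem : u.getLastD 0 ∈ u := by
      rw [List.getLastD_eq_getLast?, List.getLast?_eq_some_getLast hu]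
      exact List.getLast_mem hu
    obtain ⟨c, hc, hlt⟩ := bump hmem
    exact ⟨c, by omega, hlt⟩

lemma IsLRWord.stripChain {a w : List ℕ} {nu : ℕ → ℕ} (ha : ∀ y ∈ a, 0 < y)
    (h : IsLRWord a nu w) : StripChain a nu (w.getLastD 0) := by
  induction a using List.reverseRecOn generalizing nu w with
  | nil =>
    obtain rfl : w = [] := List.length_eq_zero_iff.1 h.ribbon.1
    obtain rfl : nu = 0 := funext fun r => (h.count_succ r).symm
    exact .nil _
  | append_singleton a x ih =>
    have ha' : ∀ y ∈ a, 0 < y := fun y hy => ha y (by simp [hy])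
    obtain ⟨la, w₁, u, rfl, hw₁, strip, rfl, -, hu0, hcount, hlast⟩ := h.exists_append ha'
    have hu : u ≠ [] := List.length_pos_iff.1 (ha _ (by simp))
    have hlast' : (w₁ ++ u).getLastD 0 = u.getLastD 0 := by
      simp [List.getLastD_eq_getLast?, List.getLast?_append, List.getLast?_eq_some_getLast hu]
    rw [hlast']
    refine (ih ha' hw₁).concat_of_letters strip hu hu0 hcount ?_
    by_cases hne : a = []
    · have : w₁ = [] := List.length_eq_zero_iff.1 (by simpa [hne] using hw₁.ribbon.1)
      obtain ⟨y, u, rfl⟩ := List.exists_cons_of_ne_nil hu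
      have : y ≠ 0 := by
        rintro rfl
        simp at hu0
      simpa [‹w₁ = []›] using Nat.pos_of_ne_zero this
    · exact hlast hne

lemma exists_pairwise_word_of_le {la nu : ℕ → ℕ} (hle : ∀ r, la r ≤ nu r) {N : ℕ}
    (hN : ∀ r, N ≤ r → nu r = 0) :
    ∃ u : List ℕ, u.Pairwise (· ≥ ·) ∧ u.count 0 = 0 ∧ (∀ r, la r + u.count (r + 1) = nu r) ∧
      ∑ r ∈ range N, nu r = ∑ r ∈ range N, la r + u.length := by
  obtain ⟨u, sorted, hlen, hu0, hcount⟩ := exists_pairwise_count (fun r => nu r - la r) N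
  refine ⟨u, sorted, hu0, fun r => ?_, ?_⟩
  · have := hle r
    rw [hcount]
    split_ifs with hr
    · omega
    · rw [hN r (by omega)] at this ⊢
      omega
  · rw [hlen, ← sum_add_distrib]
    exact sum_congr rfl fun r _ => (Nat.add_sub_cancel' (hle r)).symm

lemma StripChain.exists_isLRWord {a : List ℕ} {nu : ℕ → ℕ} {t : ℕ} (h : StripChain a nu t)
    (ha : ∀ y ∈ a, 0 < y) : ∃ w, IsLRWord a nu w ∧ w.getLastD 0 ≤ t := by
  induction h with
  | nil => exact ⟨[], .nil, Nat.zero_le _⟩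
  | @snoc a x la nu s t chain strip sum_eq exists_ge exists_lt ih =>
    have ha' : ∀ y ∈ a, 0 < y := fun y hy => ha y (by simp [hy])
    obtain ⟨w, hw, hws⟩ := ih ha'
    have nu_zero (r : ℕ) (hr : a.length + 1 ≤ r) : nu r = 0 :=
      (snoc chain strip sum_eq exists_ge exists_lt).eq_zero (by simpa using hr)
    obtain ⟨u, sorted, hu0, hcount, hsum⟩ := exists_pairwise_word_of_le strip.le nu_zero
    have hx : u.length = x := by
      rw [sum_eq, chain.sum_eq_of_le (Nat.le_add_right _ _)] at hsum
      omega
    have letter_mem {r : ℕ} (hr : la r < nu r) : r + 1 ∈ u := by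
      rw [← List.count_pos_iff]
      have := hcount r
      omega
    obtain ⟨b, hsb, hb⟩ := exists_ge
    obtain ⟨c, hct, hc⟩ := exists_lt
    have hhead := le_getD_zero_of_mem sorted (letter_mem hb)
    have hlast := getLastD_le_of_mem sorted (letter_mem hc)
    refine ⟨w ++ u, hw.concat ha' strip sorted hx hu0 hcount (by omega), ?_⟩
    have hne : u ≠ [] := List.ne_nil_of_mem (letter_mem hb)
    rw [List.getLastD_eq_getLast?, List.getLast?_eq_some_getLast hne] at hlast
    simpa [List.getLastD_eq_getLast?, List.getLast?_append, List.getLast?_eq_some_getLast hne]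
      using hlast.trans hct

lemma inSupportConn_iff {a nu : List ℕ} (ha : ∀ y ∈ a, 0 < y) :
    InSupportConn a nu ↔ ∃ t, StripChain a (part nu) t := by
  constructor
  · rintro ⟨w, ribbon, yam, count_succ, count_zero⟩
    exact ⟨_, IsLRWord.stripChain ha ⟨ribbon, yam, count_succ, count_zero⟩⟩
  · rintro ⟨t, h⟩
    obtain ⟨w, hw, -⟩ := h.exists_isLRWord ha
    exact ⟨w, hw.ribbon, hw.yam, hw.count_succ, hw.count_zero⟩

end Chains

/-! ### Necessary conditions on the Schur support -/

lemma sum_part (a : List ℕ) (k : ℕ) : ∑ r ∈ range k, part a r = (a.take k).sum := by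
  induction a generalizing k with
  | nil => simp [part]
  | cons x a ih =>
    cases k with
    | zero => rfl
    | succ k =>
      rw [sum_range_succ', List.take_succ_cons, List.sum_cons, ← ih, add_comm]
      rfl

lemma sum_part_length (a : List ℕ) : ∑ r ∈ range a.length, part a r = a.sum := by
  rw [sum_part, List.take_length]

lemma part_eq_zero {a : List ℕ} {r : ℕ} (hr : a.length ≤ r) : part a r = 0 :=
  List.getD_eq_default _ _ hr

lemma le_part {a : List ℕ} {m : ℕ} (ha : PartsGE a m) {r : ℕ} (hr : r < a.length) :
    m ≤ part a r := by
  rw [part, List.getD_eq_getElem _ _ hr]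
  exact ha _ (List.getElem_mem hr)

lemma IsPartition.antitone_part {a : List ℕ} (ha : IsPartition a) : Antitone (part a) := by
  refine antitone_nat_of_succ_le fun r => ?_
  rcases lt_or_ge (r + 1) a.length with hr | hr
  · exact forall_getD_succ_le_iff_pairwise.2 ha.1 r hr
  · rw [part_eq_zero hr]
    exact Nat.zero_le _

lemma exists_isPartition_part_eq {f : ℕ → ℕ} (hf : Antitone f) {N : ℕ} (hN : f N = 0) :
    ∃ nu, IsPartition nu ∧ part nu = f := by
  classical
  have hex : ∃ n, f n = 0 := ⟨N, hN⟩
  refine ⟨(List.range (Nat.find hex)).map f, ⟨?_, fun x hx => ?_⟩, funext fun r => ?_⟩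
  · exact List.pairwise_map.2 (List.pairwise_lt_range.imp fun h => hf h.le)
  · obtain ⟨r, hr, rfl⟩ := List.mem_map.1 hx
    exact Nat.pos_of_ne_zero (Nat.find_min hex (List.mem_range.1 hr))
  · rcases lt_or_ge r (Nat.find hex) with hr | hr
    · simp [part, hr]
    · rw [part_eq_zero (by simpa using hr)]
      exact (Nat.eq_zero_of_le_zero ((hf hr).trans (Nat.find_spec hex).le)).symm

namespace IsHorizontalStrip

variable {la nu : ℕ → ℕ}

lemma sum_add_sum_le (h : IsHorizontalStrip la nu) {k N : ℕ} (hk : k ≤ N) :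
    ∑ r ∈ range (N + 1), nu r + ∑ r ∈ range k, la r ≤
      ∑ r ∈ range (k + 1), nu r + ∑ r ∈ range N, la r := by
  induction N, hk using Nat.le_induction with
  | base => rfl
  | succ N _ ih =>
    rw [sum_range_succ nu, sum_range_succ la N]
    have := h.interlace N
    omega

lemma add_card_le (h : IsHorizontalStrip la nu) {N x : ℕ}
    (hsum : ∑ r ∈ range N, nu r = ∑ r ∈ range N, la r + x) {T : Finset ℕ}
    (hT : ∀ r ∈ T, r < N ∧ la r < nu r) {i : ℕ} (hiN : i < N) (hi : i ∉ T) :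
    nu i + #T ≤ la i + x := by
  have hx : ∑ r ∈ range N, (nu r - la r) = x := by
    have : ∑ r ∈ range N, nu r = ∑ r ∈ range N, la r + ∑ r ∈ range N, (nu r - la r) := by
      rw [← sum_add_distrib]
      exact sum_congr rfl fun r _ => (Nat.add_sub_cancel' (h.le r)).symm
    omega
  have hsub : insert i T ⊆ range N := fun r hr => by
    rcases mem_insert.1 hr with rfl | hr
    · simpa using hiN
    · simpa using (hT r hr).1
  have hle := sum_le_sum_of_subset (f := fun r => nu r - la r) hsub
  rw [sum_insert hi, hx] at hle
  have hcard : #T ≤ ∑ r ∈ T, (nu r - la r) := by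
    simpa using card_nsmul_le_sum T (fun r => nu r - la r) 1 fun r hr => by
      have := (hT r hr).2
      omega
  omega

end IsHorizontalStrip

namespace StripChain

variable {a : List ℕ} {nu : ℕ → ℕ} {t : ℕ}

lemma antitone (h : StripChain a nu t) : Antitone nu := by
  refine antitone_nat_of_succ_le fun r => ?_
  cases h with
  | nil => rfl
  | snoc _ strip => exact (strip.interlace r).trans (strip.le r)

lemma snoc_of_sum_eq {x s N : ℕ} {la : ℕ → ℕ} (chain : StripChain a la s)
    (strip : IsHorizontalStrip la nu) (hN : ∀ r, N ≤ r → nu r = 0)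
    (sum_eq : ∑ r ∈ range N, nu r = a.sum + x) (exists_ge : ∃ b, s ≤ b ∧ la b < nu b)
    (exists_lt : ∃ c, c < t ∧ la c < nu c) : StripChain (a ++ [x]) nu t := by
  refine snoc chain strip ?_ exists_ge exists_lt
  have hlen (r : ℕ) (hr : a.length + 1 ≤ r) : nu r = 0 := by
    obtain ⟨r, rfl⟩ := Nat.exists_eq_add_one_of_ne_zero (n := r) (by omega)
    exact Nat.eq_zero_of_le_zero ((strip.interlace r).trans (chain.eq_zero (by omega)).le)
  rw [← eventually_constant_sum hlen (le_max_right N _), ← sum_eq,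
    eventually_constant_sum hN (le_max_left _ _)]

lemma sum_le_of_sublist (h : StripChain a nu t) {l : List ℕ} (hl : l.Sublist a) :
    l.sum ≤ ∑ r ∈ range l.length, nu r := by
  induction h generalizing l with
  | nil => simp [List.sublist_nil.1 hl]
  | @snoc a x la nu s t chain strip sum_eq _ _ ih =>
    obtain ⟨l₁, l₂, rfl, hl₁, hl₂⟩ := List.sublist_append_iff.1 hl
    have hle := ih hl₁
    rcases List.sublist_singleton.1 hl₂ with rfl | rfl
    · simpa using hle.trans (sum_le_sum fun r _ => strip.le r)
    · have := strip.sum_add_sum_le hl₁.length_le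
      rw [sum_eq, chain.sum_eq_of_le le_rfl] at this
      simp only [List.sum_append, List.length_append, List.sum_singleton, List.length_singleton]
      omega

lemma sum_le_of_subperm (h : StripChain a nu t) {l : List ℕ} (hl : l.Subperm a) :
    l.sum ≤ ∑ r ∈ range l.length, nu r := by
  obtain ⟨l', hperm, hsub⟩ := hl
  rw [← hperm.sum_eq, ← hperm.length_eq]
  exact h.sum_le_of_sublist hsub

/-- The improved bound for `t ≤ i` pays for the case in which row `i` itself receives the box that
each strip must have weakly below the top row of the previous one. -/
lemma add_length_le (h : StripChain a nu t) {i : ℕ} (hi : i < a.length) :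
    nu i + a.length ≤ (a.drop i).sum + i + 1 ∧
      (t ≤ i → nu i + a.length ≤ (a.drop i).sum + i) := by
  induction h generalizing i with
  | nil => simp at hi
  | @snoc a x la nu s t chain strip sum_eq exists_ge exists_lt ih =>
    have hsum := sum_eq
    rw [← chain.sum_eq_of_le (Nat.le_add_right _ 1)] at hsum
    have grow {T : Finset ℕ} (hT : ∀ r ∈ T, la r < nu r) (hiT : i ∉ T) :
        nu i + #T ≤ la i + x := by
      refine strip.add_card_le hsum (fun r hr => ⟨?_, hT r hr⟩) (by simpa using hi) hiT
      by_contra hlt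
      have := (snoc chain strip sum_eq exists_ge exists_lt).eq_zero (r := r) (by simp; omega)
      have := hT r hr
      omega
    obtain ⟨b, hsb, hb⟩ := exists_ge
    obtain ⟨c, hct, hc⟩ := exists_lt
    have grow_none := grow (T := ∅) (by simp) (by simp)
    have grow_b (h : i ≠ b) := grow (T := {b}) (by simpa) (by simpa)
    have grow_c (h : i ≠ c) := grow (T := {c}) (by simpa) (by simpa)
    have grow_bc (h : i ≠ b) (h' : i ≠ c) (hbc : b ≠ c) : nu i + 2 ≤ la i + x := by
      simpa [card_pair hbc] using grow (T := {b, c}) (by simp [hb, hc]) (by simp [h, h'])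
    simp only [card_empty, card_singleton] at grow_none grow_b grow_c
    simp only [List.length_append, List.length_singleton] at hi ⊢
    rcases Nat.lt_succ_iff_lt_or_eq.1 hi with hi | rfl
    · obtain ⟨ih₁, ih₂⟩ := ih hi
      rw [List.drop_append_of_le_length hi.le, List.sum_append, List.sum_singleton]
      rcases eq_or_ne i b with rfl | hib
      · have := ih₂ hsb
        exact ⟨by omega, fun hti => by have := grow_c (by omega); omega⟩
      · have := grow_b hib
        refine ⟨by omega, fun hti => ?_⟩
        rcases eq_or_ne b c with rfl | hbc
        · have := ih₂ (by omega)
          omega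
        · have := grow_bc hib (by omega) hbc
          omega
    · have := chain.eq_zero (le_refl a.length)
      rw [List.drop_left, List.sum_singleton]
      exact ⟨by omega, fun hti => by have := grow_c (by omega); omega⟩

end StripChain

/-! ### Dominance intervals -/

/-- The shape `nu` has at most `l` rows and dominates the composition `al` of length `l` of the
same size; both are given by their row lengths. -/
structure Dominates (al : ℕ → ℕ) (l : ℕ) (nu : ℕ → ℕ) : Prop where
  antitone : Antitone nu
  eq_zero : ∀ r, l ≤ r → nu r = 0
  sum_eq : ∑ r ∈ range l, nu r = ∑ r ∈ range l, al r
  sum_le : ∀ j ≤ l, ∑ r ∈ range j, al r ≤ ∑ r ∈ range j, nu r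

/-- The bound `nu i ≤ al i + ⋯ + al (l - 1) - (l - i - 1)` on row `i` of a shape in the support of
the connected ribbon with rows `al 0, …, al (l - 1)`, written without subtraction. For `i = 0` it
is the upper end of the dominance interval. -/
def WithinCap (al : ℕ → ℕ) (l : ℕ) (nu : ℕ → ℕ) (i : ℕ) : Prop :=
  nu i + l + ∑ r ∈ range i, al r ≤ ∑ r ∈ range l, al r + i + 1

namespace StripChain

variable {a b : List ℕ} {nu : ℕ → ℕ} {t : ℕ}

lemma dominates (h : StripChain b nu t) (hba : b.Perm a) :
    Dominates (part a) a.length nu where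
  antitone := h.antitone
  eq_zero r hr := h.eq_zero (hba.length_eq.trans_le hr)
  sum_eq := by rw [sum_part_length, ← hba.sum_eq, h.sum_eq_of_le hba.length_eq.le]
  sum_le j hj := by
    have := h.sum_le_of_subperm ((List.take_sublist j a).subperm.trans hba.symm.subperm)
    rwa [List.length_take_of_le hj, ← sum_part] at this

lemma withinCap (h : StripChain a nu t) {i : ℕ} (hi : i < a.length) :
    WithinCap (part a) a.length nu i := by
  have := (h.add_length_le hi).1
  have := List.sum_take_add_sum_drop a i
  rw [WithinCap, sum_part, sum_part_length]
  omega

end StripChain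

lemma domLE_iff_dominates {a nu : List ℕ} (hnu : IsPartition nu) :
    DomLE a nu ↔ Dominates (part a) a.length (part nu) := by
  have total {N : ℕ} (hN : nu.length ≤ N) : ∑ r ∈ range N, part nu r = nu.sum := by
    rw [sum_part, List.take_of_length_le hN]
  simp only [DomLE, ← sum_part]
  constructor
  · rintro ⟨hsum, hle⟩
    have hle_sum (k : ℕ) : ∑ r ∈ range k, part nu r ≤ nu.sum := by
      rw [sum_part]
      exact List.Sublist.sum_le_sum (List.take_sublist _ _) (by simp)
    have hsum_le := hle a.length
    rw [sum_part_length, hsum] at hsum_le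
    refine ⟨hnu.antitone_part, fun r hr => ?_, ?_, fun j _ => hle j⟩
    · have := hle_sum (r + 1)
      have := sum_le_sum_of_subset (f := part nu) (range_subset_range.2 hr)
      rw [sum_range_succ] at *
      omega
    · rw [sum_part_length, hsum]
      exact (hle_sum _).antisymm hsum_le
  · intro h
    have hsum : a.sum = nu.sum := by
      rw [← sum_part_length, ← h.sum_eq, ← total (le_max_left nu.length a.length),
        eventually_constant_sum h.eq_zero (le_max_right _ _)]
    refine ⟨hsum, fun j => ?_⟩
    rcases le_total j a.length with hj | hj
    · exact h.sum_le j hj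
    · rw [eventually_constant_sum h.eq_zero hj, h.sum_eq,
        eventually_constant_sum (fun r => part_eq_zero) hj]

lemma domLE_pair_iff_withinCap {a nu : List ℕ} (ha : a ≠ []) (hlen : a.length ≤ a.sum)
    (hsum : nu.sum = a.sum) :
    DomLE nu [a.sum - (a.length - 1), a.length - 1] ↔
      WithinCap (part a) a.length (part nu) 0 := by
  have hpos := List.length_pos_iff.2 ha
  have htake : (nu.take 1).sum = part nu 0 := by rw [← sum_part, sum_range_one]
  simp only [DomLE, WithinCap, sum_part_length, range_zero, sum_empty, hsum, List.sum_cons,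
    List.sum_nil]
  constructor
  · rintro ⟨-, h⟩
    have := h 1
    rw [htake, List.take_succ_cons, List.take_zero, List.sum_singleton] at this
    omega
  · refine fun h => ⟨by omega, fun i => ?_⟩
    match i with
    | 0 => simp
    | 1 =>
      rw [htake, List.take_succ_cons, List.take_zero, List.sum_singleton]
      omega
    | i + 2 =>
      have : (nu.take (i + 2)).sum ≤ nu.sum :=
        List.Sublist.sum_le_sum (List.take_sublist _ _) (by simp)
      simp only [List.take_succ_cons, List.take_nil, List.sum_cons, List.sum_nil]
      omega

section Support

variable {a b : List ℕ}

lemma fullSupportConn_iff (ha : ∀ y ∈ a, 0 < y) (hne : a ≠ []) :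
    FullSupportConn a ↔ ∀ f, Dominates (part a) a.length f → WithinCap (part a) a.length f 0 →
      ∃ t, StripChain a f t := by
  have hlen : a.length ≤ a.sum := by
    simpa using List.length_le_sum_of_one_le a ha
  have hmem (nu : List ℕ) : (IsPartition nu ∧ DomLE a nu ∧
      DomLE nu [a.sum - (a.length - 1), a.length - 1]) ↔
      IsPartition nu ∧ Dominates (part a) a.length (part nu) ∧
        WithinCap (part a) a.length (part nu) 0 := by
    refine and_congr_right fun hnu => ?_
    rw [← domLE_iff_dominates hnu]
    exact and_congr_right fun h => domLE_pair_iff_withinCap hne hlen h.1.symm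
  simp only [FullSupportConn, SupportSetConn, Set.ext_iff, Set.mem_ofPred_eq, hmem,
    inSupportConn_iff ha]
  refine ⟨fun h f hf hcap => ?_, fun h nu => and_congr_right fun _ => ?_⟩
  · obtain ⟨nu, hnu, rfl⟩ := exists_isPartition_part_eq hf.antitone (hf.eq_zero _ le_rfl)
    exact ((h nu).2 ⟨hnu, hf, hcap⟩).2
  · refine ⟨fun ⟨t, ht⟩ => ?_, fun ⟨hdom, hcap⟩ => h _ hdom hcap⟩
    exact ⟨ht.dominates (.refl a), ht.withinCap (List.length_pos_iff.2 hne)⟩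

lemma supportSetConn_eq_iff (ha : ∀ y ∈ a, 0 < y) (hb : ∀ y ∈ b, 0 < y) :
    SupportSetConn b = SupportSetConn a ↔
      ∀ f, (∃ t, StripChain b f t) ↔ ∃ t, StripChain a f t := by
  simp only [SupportSetConn, Set.ext_iff, Set.mem_ofPred_eq, inSupportConn_iff ha,
    inSupportConn_iff hb]
  refine ⟨fun h f => ?_, fun h nu => and_congr_right fun _ => h _⟩
  by_cases hf : ∃ nu, IsPartition nu ∧ part nu = f
  · obtain ⟨nu, hnu, rfl⟩ := hf
    simpa [hnu] using h nu
  · have not_chain {l : List ℕ} : ¬ ∃ t, StripChain l f t := fun ⟨_, ht⟩ =>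
      hf (exists_isPartition_part_eq ht.antitone (ht.eq_zero le_rfl))
    exact iff_of_false not_chain not_chain

lemma fullEquivClass_iff (ha : ∀ y ∈ a, 0 < y) :
    FullEquivClass a ↔
      ∀ b, b.Perm a → ∀ f, (∃ t, StripChain b f t) ↔ ∃ t, StripChain a f t :=
  forall₂_congr fun _ hb => supportSetConn_eq_iff ha fun y hy => ha y (hb.mem_iff.1 hy)

end Support

/-! ### Peeling horizontal strips off a shape -/

lemma sum_range_add_mul_le {f : ℕ → ℕ} {d i j : ℕ} (hij : i ≤ j)
    (hf : ∀ r, i ≤ r → r < j → d ≤ f r) :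
    ∑ r ∈ range i, f r + d * (j - i) ≤ ∑ r ∈ range j, f r := by
  rw [← sum_range_add_sum_Ico f hij, mul_comm]
  gcongr
  simpa using card_nsmul_le_sum (Ico i j) f d fun r hr => hf r (mem_Ico.1 hr).1 (mem_Ico.1 hr).2

lemma exists_last_pos {f : ℕ → ℕ} (h0 : 0 < f 0) {N : ℕ} (hN : f N = 0) :
    ∃ m, 0 < f m ∧ f (m + 1) = 0 := by
  by_contra! h
  have hpos (n : ℕ) : 0 < f n := by
    induction n with
    | zero => exact h0
    | succ n ih => exact Nat.pos_of_ne_zero (h n ih)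
  exact (hpos N).ne' hN

/-- The strict form of `WithinCap`. -/
def BelowCap (al : ℕ → ℕ) (l : ℕ) (nu : ℕ → ℕ) (i : ℕ) : Prop :=
  nu i + l + ∑ r ∈ range i, al r ≤ ∑ r ∈ range l, al r + i

/-- The shape `nu` satisfies the necessary conditions for lying in the support of a connected
ribbon with rows `al 0, …, al (l - 1)`. -/
structure IsAdmissible (al : ℕ → ℕ) (l : ℕ) (nu : ℕ → ℕ) : Prop extends
    Dominates al l nu where
  withinCap : ∀ i < l, WithinCap al l nu i

/-- A sufficient condition for an admissible shape `nu` to be reachable by a chain whose last strip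
starts above row `t`: row `t` is empty, or it is the last row and has slack both against the row
above it and against its cap. -/
def FinishesBy (al : ℕ → ℕ) (l : ℕ) (nu : ℕ → ℕ) (t : ℕ) : Prop :=
  nu t = 0 ∨ nu (t + 1) = 0 ∧ (∃ c, c + 1 = t ∧ nu t < nu c) ∧ BelowCap al l nu t

/-- The strip `nu / la` can be the last one of a chain reaching the shape `nu` with last row `m`:
it touches row `m`, and `la` is admissible for the first `l` rows of the ribbon and satisfies
`FinishesBy al l la m`. -/
structure IsPeel (al : ℕ → ℕ) (l : ℕ) (nu : ℕ → ℕ) (m : ℕ) (la : ℕ → ℕ) : Prop where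
  strip : IsHorizontalStrip la nu
  admissible : IsAdmissible al l la
  lt : la m < nu m
  belowCap : la m ≠ 0 → BelowCap al l la m

lemma IsHorizontalStrip.antitone {la nu : ℕ → ℕ} (h : IsHorizontalStrip la nu) : Antitone la :=
  antitone_nat_of_succ_le fun r => (h.le (r + 1)).trans (h.interlace r)

section Peel

variable {al la nu : ℕ → ℕ} {l m : ℕ}

lemma isPeel_of_lt (hal : ∀ i < l, 1 ≤ al i) (hm0 : nu (m + 1) = 0)
    (strip : IsHorizontalStrip la nu) (hsum : ∑ r ∈ range (l + 1), la r = ∑ r ∈ range l, al r)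
    (hsum_le : ∀ j ≤ l, ∑ r ∈ range j, al r ≤ ∑ r ∈ range j, la r)
    (hcap : ∀ i < m, WithinCap al l la i) (hlt : la m < nu m)
    (hbelow : la m ≠ 0 → BelowCap al l la m) : IsPeel al l nu m la := by
  have hl := hsum_le l le_rfl
  rw [sum_range_succ] at hsum
  refine ⟨strip, ⟨⟨strip.antitone, fun r hr => ?_, by omega, hsum_le⟩, fun i hi => ?_⟩, hlt,
    hbelow⟩
  · have := strip.antitone hr
    omega
  · have hgrow := sum_range_add_mul_le hi.le fun r _ hr => hal r hr
    rcases lt_or_ge i m with him | hmi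
    · exact hcap i him
    by_cases hz : la i = 0
    · rw [WithinCap]
      omega
    · obtain rfl : i = m := by
        by_contra hne
        have := strip.antitone (show m + 1 ≤ i by omega)
        have := strip.le (m + 1)
        omega
      have := hbelow hz
      rw [BelowCap] at this
      rw [WithinCap]
      omega

/-- Removal of `y` boxes from `nu`, each row giving up as many boxes as a horizontal strip permits
before the row above it is touched: the rows from `r` on lose `min (nu r) y` boxes altogether. -/
def greedyPeel (nu : ℕ → ℕ) (y r : ℕ) : ℕ := nu r + min (nu (r + 1)) y - min (nu r) y

lemma isHorizontalStrip_greedyPeel (hnu : Antitone nu) (y : ℕ) :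
    IsHorizontalStrip (greedyPeel nu y) nu := by
  constructor <;> intro r <;> have := hnu (Nat.le_add_right r 1) <;> unfold greedyPeel <;> omega

lemma sum_greedyPeel (nu : ℕ → ℕ) (y k : ℕ) :
    ∑ r ∈ range k, greedyPeel nu y r + min (nu 0) y = ∑ r ∈ range k, nu r + min (nu k) y := by
  induction k with
  | zero => simp
  | succ k ih =>
    rw [sum_range_succ, sum_range_succ, greedyPeel]
    omega

lemma Dominates.le_zero (h : Dominates al (l + 1) nu) (hal : Antitone al) : al l ≤ nu 0 := by
  have := h.sum_le 1 (by omega)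
  rw [sum_range_one, sum_range_one] at this
  exact (hal (Nat.zero_le l)).trans this

lemma Dominates.sum_greedyPeel_add (h : Dominates al (l + 1) nu) (hal : Antitone al) (k : ℕ) :
    ∑ r ∈ range k, greedyPeel nu (al l) r + al l =
      ∑ r ∈ range k, nu r + min (nu k) (al l) := by
  rw [← sum_greedyPeel, min_eq_right (h.le_zero hal)]

lemma IsAdmissible.last_le (h : IsAdmissible al l nu) (hm : 0 < nu m) : m < l := by
  by_contra hlm
  have := h.eq_zero m (by omega)
  omega

lemma IsAdmissible.isPeel_greedyPeel (h : IsAdmissible al (l + 1) nu) (hal : Antitone al)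
    (h2 : ∀ i < l + 1, 2 ≤ al i) (hm : 0 < nu m) (hm0 : nu (m + 1) = 0)
    (hcap : ∀ i < m, WithinCap al l (greedyPeel nu (al l)) i) :
    IsPeel al l nu m (greedyPeel nu (al l)) := by
  have hsum := h.sum_greedyPeel_add hal
  have hl2 := h2 l (Nat.lt_succ_self l)
  have hml := h.last_le hm
  refine isPeel_of_lt (fun i hi => one_le_two.trans (h2 i (by omega))) hm0
    (isHorizontalStrip_greedyPeel h.antitone _) ?_ (fun j hj => ?_) hcap ?_ fun _ => ?_
  · have := hsum (l + 1)
    rw [h.eq_zero _ le_rfl, h.sum_eq, sum_range_succ al] at this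
    omega
  · have := hsum j
    have := h.sum_le j (by omega)
    have hsucc := h.sum_le (j + 1) (by omega)
    rw [sum_range_succ, sum_range_succ] at hsucc
    have := hal hj
    omega
  · unfold greedyPeel
    omega
  · have := h.withinCap m hml
    rw [WithinCap, sum_range_succ al l] at this
    unfold greedyPeel at *
    rw [BelowCap]
    omega

lemma IsAdmissible.exists_greedyPeel_lt (h : IsAdmissible al (l + 1) nu) (hal : Antitone al)
    (hlt : nu m < al l) : ∃ c < m, greedyPeel nu (al l) c < nu c := by
  have := h.sum_greedyPeel_add hal m
  have : ∑ r ∈ range m, greedyPeel nu (al l) r < ∑ r ∈ range m, nu r := by omega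
  obtain ⟨c, hc, hc'⟩ := exists_lt_of_sum_lt this
  exact ⟨c, mem_range.1 hc, hc'⟩

/-- Removal of one box from row `c` and `y - 1` boxes from row `c + 1`. -/
def cornerPeel (nu : ℕ → ℕ) (c y r : ℕ) : ℕ :=
  if r = c then nu r - 1 else if r = c + 1 then nu r - (y - 1) else nu r

lemma isHorizontalStrip_cornerPeel (hnu : Antitone nu) {c y : ℕ} (hc : nu (c + 1) < nu c)
    (hc0 : nu (c + 1 + 1) = 0) : IsHorizontalStrip (cornerPeel nu c y) nu := by
  constructor <;> intro r <;> have := hnu (Nat.le_add_right r 1) <;> unfold cornerPeel <;>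
    split_ifs with h h' <;> subst_vars <;> omega

lemma sum_cornerPeel {c y : ℕ} (hc : 1 ≤ nu c) (hy : y ≤ nu (c + 1) + 1) (k : ℕ) :
    ∑ r ∈ range k, cornerPeel nu c y r + (if c < k then 1 else 0) +
      (if c + 1 < k then y - 1 else 0) = ∑ r ∈ range k, nu r := by
  induction k with
  | zero => simp
  | succ k ih =>
    rw [sum_range_succ, sum_range_succ, cornerPeel]
    rcases lt_trichotomy k c with hk | rfl | hk
    · simp only [hk.not_gt, if_false, show ¬ c < k + 1 by omega, show ¬ c + 1 < k + 1 by omega,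
        show ¬ c + 1 < k by omega, show k ≠ c by omega, show k ≠ c + 1 by omega] at ih ⊢
      omega
    · simp at ih ⊢
      omega
    · rcases eq_or_ne k (c + 1) with rfl | hk'
      · simp at ih ⊢
        omega
      · simp only [hk, if_true, if_false, show c < k + 1 by omega, show c + 1 < k + 1 by omega,
          show c + 1 < k by omega, hk.ne', hk'] at ih ⊢
        omega

lemma IsAdmissible.isPeel_cornerPeel {c : ℕ} (h : IsAdmissible al (l + 1) nu)
    (h2 : ∀ i < l + 1, 2 ≤ al i) (hc0 : nu (c + 2) = 0) (hc : nu (c + 1) < nu c)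
    (hbelow : BelowCap al (l + 1) nu (c + 1)) (hle : al l ≤ nu (c + 1))
    (hcap : ∀ i ≤ c, WithinCap al l nu i) :
    IsPeel al l nu (c + 1) (cornerPeel nu c (al l)) := by
  have hl2 := h2 l (Nat.lt_succ_self l)
  have hml := h.last_le (m := c + 1) (by omega)
  have strip := isHorizontalStrip_cornerPeel (y := al l) h.antitone hc hc0
  have hsum := sum_cornerPeel (nu := nu) (c := c) (y := al l) (by omega) (by omega)
  have nu_zero (r : ℕ) (hr : c + 2 ≤ r) : nu r = 0 :=
    Nat.eq_zero_of_le_zero ((h.antitone hr).trans hc0.le)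
  have htotal := h.sum_eq
  rw [sum_range_succ al] at htotal
  refine isPeel_of_lt (fun i hi => one_le_two.trans (h2 i (by omega))) hc0 strip ?_
    (fun j hj => ?_) (fun i hi => ?_) ?_ fun _ => ?_
  · have := hsum (l + 1)
    rw [if_pos (by omega), if_pos (by omega)] at this
    omega
  · have := hsum j
    have hj_le := h.sum_le j (by omega)
    rcases lt_trichotomy j (c + 1) with hj | rfl | hj'
    · rw [if_neg (by omega), if_neg (by omega)] at this
      omega
    · rw [BelowCap, sum_range_succ al l] at hbelow
      rw [eventually_constant_sum nu_zero (by omega), sum_range_succ nu (c + 1)] at htotal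
      simp only [lt_add_iff_pos_right, zero_lt_one, if_true, lt_irrefl, if_false] at this
      omega
    · rw [if_pos (by omega), if_pos hj'] at this
      rw [eventually_constant_sum nu_zero (show c + 2 ≤ l + 1 by omega)] at htotal
      rw [eventually_constant_sum nu_zero hj'] at this
      have := sum_le_sum_of_subset (f := al) (range_subset_range.2 hj)
      omega
  · have := hcap i (by omega)
    have := strip.le i
    rw [WithinCap] at *
    omega
  · simp [cornerPeel]
    omega
  · rw [BelowCap, sum_range_succ al l] at hbelow
    simp only [BelowCap, cornerPeel, if_true, if_false, show c + 1 ≠ c by omega]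
    omega

/-- Removal of `d` boxes from row `i` and of `y` boxes, greedily, from the rows below it. -/
def excessPeel (nu : ℕ → ℕ) (i d y r : ℕ) : ℕ :=
  if r < i then nu r else if r = i then nu r - d else greedyPeel nu y r

lemma isHorizontalStrip_excessPeel (hnu : Antitone nu) {i d : ℕ} (y : ℕ)
    (hd : nu (i + 1) + d ≤ nu i) : IsHorizontalStrip (excessPeel nu i d y) nu := by
  have greedy := isHorizontalStrip_greedyPeel hnu y
  constructor <;> intro r <;> have := hnu (Nat.le_add_right r 1) <;> unfold excessPeel <;>
    split_ifs with hlt heq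
  · rfl
  · omega
  · exact greedy.le r
  · exact this
  · subst heq
    omega
  · exact greedy.interlace r

lemma sum_excessPeel_of_le {i k : ℕ} (hk : k ≤ i) (d y : ℕ) :
    ∑ r ∈ range k, excessPeel nu i d y r = ∑ r ∈ range k, nu r :=
  sum_congr rfl fun r hr => if_pos (by have := mem_range.1 hr; omega)

lemma sum_excessPeel_of_lt {i d y k : ℕ} (hd : d ≤ nu i) (hy : y ≤ nu (i + 1)) (hk : i + 1 ≤ k) :
    ∑ r ∈ range k, excessPeel nu i d y r + (d + y) = ∑ r ∈ range k, nu r + min (nu k) y := by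
  induction k, hk using Nat.le_induction with
  | base =>
    rw [sum_range_succ, sum_range_succ, sum_excessPeel_of_le le_rfl, excessPeel,
      if_neg (lt_irrefl _), if_pos rfl]
    omega
  | succ k hk ih =>
    rw [sum_range_succ, sum_range_succ, excessPeel, if_neg (by omega), if_neg (by omega),
      greedyPeel]
    omega

/-- A positive row `j > i` of the peeled shape forces all rows between `i` and `j` to be positive,
which leaves few boxes for row `j`. -/
lemma IsAdmissible.excessPeel_bound {i d y j : ℕ} (h : IsAdmissible al (l + 1) nu)
    (hd : nu i + l + ∑ r ∈ range i, al r = ∑ r ∈ range l, al r + i + 1 + d)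
    (hdy : d + y = al l) (hgap : nu (i + 1) + d ≤ nu i) (hy : y ≤ nu (i + 1)) (hij : i < j)
    (hjl : j ≤ l) (hj : 0 < excessPeel nu i d y j) :
    ∑ r ∈ range l, al r + j ≤ ∑ r ∈ range j, excessPeel nu i d y r + l ∧
      excessPeel nu i d y j + j ≤ l := by
  have strip := isHorizontalStrip_excessPeel h.antitone y hgap
  have hgrow := sum_range_add_mul_le (f := excessPeel nu i d y) (d := 1) hij
    fun r _ hr => hj.trans_le (strip.antitone hr.le)
  have hrow : excessPeel nu i d y i = nu i - d := by simp [excessPeel]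
  rw [sum_range_succ, sum_excessPeel_of_le le_rfl, hrow] at hgrow
  have htotal := sum_excessPeel_of_lt (d := d) (by omega) hy (show i + 1 ≤ l + 1 by omega)
  rw [h.eq_zero _ le_rfl, h.sum_eq, sum_range_succ al] at htotal
  have := sum_le_sum_of_subset (f := excessPeel nu i d y)
    (range_subset_range.2 (show j + 1 ≤ l + 1 by omega))
  rw [sum_range_succ] at this
  have := h.sum_le i (by omega)
  omega

lemma IsAdmissible.sum_excessPeel {i d y : ℕ} (h : IsAdmissible al (l + 1) nu) (hil : i < l + 1)
    (hd : d ≤ nu i) (hdy : d + y = al l) (hy : y ≤ nu (i + 1)) :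
    ∑ r ∈ range (l + 1), excessPeel nu i d y r = ∑ r ∈ range l, al r := by
  have := sum_excessPeel_of_lt hd hy (Nat.succ_le_of_lt hil)
  rw [h.eq_zero _ le_rfl, h.sum_eq, sum_range_succ al] at this
  omega

lemma IsAdmissible.isPeel_excessPeel {i d y : ℕ} (h : IsAdmissible al (l + 1) nu)
    (h2 : ∀ i < l + 1, 2 ≤ al i) (hm : 0 < nu m) (hm0 : nu (m + 1) = 0) (him : i < m)
    (hd : nu i + l + ∑ r ∈ range i, al r = ∑ r ∈ range l, al r + i + 1 + d)
    (hdy : d + y = al l) (hgap : nu (i + 1) + d ≤ nu i) (hy0 : 0 < y) (hy : y ≤ nu (i + 1))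
    (hmin : ∀ k < i, WithinCap al l nu k) :
    IsPeel al l nu m (excessPeel nu i d y) := by
  have hml := h.last_le hm
  have strip := isHorizontalStrip_excessPeel h.antitone y hgap
  have hbound {j : ℕ} := h.excessPeel_bound (j := j) hd hdy hgap hy
  have hgrow {j : ℕ} (hj : j ≤ l) := sum_range_add_mul_le hj fun r _ hr => h2 r (by omega)
  have total := h.sum_excessPeel (by omega) (by omega) hdy hy
  refine isPeel_of_lt (fun i hi => one_le_two.trans (h2 i (by omega))) hm0 strip total
    (fun j hj => ?_) (fun k hk => ?_) ?_ fun hne => ?_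
  · rcases le_or_gt j i with hji | hij
    · rw [sum_excessPeel_of_le hji]
      exact h.sum_le j (by omega)
    · have := hgrow hj
      rcases Nat.eq_zero_or_pos (excessPeel nu i d y j) with hz | hz
      · have hzero (r : ℕ) (hr : j ≤ r) : excessPeel nu i d y r = 0 :=
          Nat.eq_zero_of_le_zero ((strip.antitone hr).trans hz.le)
        rw [← eventually_constant_sum hzero (show j ≤ l + 1 by omega), total]
        omega
      · have := hbound hij hj hz
        omega
  · rcases lt_trichotomy k i with hki | rfl | hik
    · simpa [WithinCap, excessPeel, hki] using hmin k hki
    · simp only [WithinCap, excessPeel, lt_irrefl, if_true, if_false]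
      omega
    · have := hgrow (show k ≤ l by omega)
      rw [WithinCap]
      rcases Nat.eq_zero_or_pos (excessPeel nu i d y k) with hz | hz
      · omega
      · have := hbound hik (by omega) hz
        omega
  · simp only [excessPeel, greedyPeel, if_neg him.not_gt, if_neg him.ne']
    omega
  · have := hbound him (by omega) (Nat.pos_of_ne_zero hne)
    have := hgrow (show m ≤ l by omega)
    rw [BelowCap]
    omega

lemma IsAdmissible.withinCap_greedyPeel_of_excess {i d k : ℕ} (h : IsAdmissible al (l + 1) nu)
    (hal : Antitone al)
    (hd : nu i + l + ∑ r ∈ range i, al r = ∑ r ∈ range l, al r + i + 1 + d)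
    (hlt : nu (i + 1) + d < al l) (hle : al l ≤ nu i) (hmin : ∀ k < i, WithinCap al l nu k)
    (hk : k < l) : WithinCap al l (greedyPeel nu (al l)) k := by
  have := (isHorizontalStrip_greedyPeel h.antitone (al l)).le k
  rw [WithinCap]
  rcases lt_trichotomy k i with hki | rfl | hik
  · have := hmin k hki
    rw [WithinCap] at this
    omega
  · unfold greedyPeel
    omega
  · have hcap := h.withinCap (k + 1) (by omega)
    rw [WithinCap, sum_range_succ, sum_range_succ] at hcap
    have := h.antitone (show i + 1 ≤ k by omega)
    have := hal hk.le
    unfold greedyPeel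
    omega

lemma IsAdmissible.gap_of_excess {i d : ℕ} (h : IsAdmissible al (l + 1) nu) (hal : Antitone al)
    (h2 : ∀ i < l + 1, 2 ≤ al i) (hil : i < l)
    (hd : nu i + l + ∑ r ∈ range i, al r = ∑ r ∈ range l, al r + i + 1 + d) :
    nu (i + 1) + d ≤ nu i ∧ al l ≤ nu i := by
  have hgrow := sum_range_add_mul_le (Nat.succ_le_of_lt hil) fun r _ hr => h2 r (by omega)
  have hle := sum_le_sum_of_subset (f := nu) (range_subset_range.2 (show i + 2 ≤ l + 1 by omega))
  rw [sum_range_succ, sum_range_succ, h.sum_eq, sum_range_succ] at hle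
  rw [sum_range_succ] at hgrow
  have := h.sum_le i (by omega)
  have := hal hil.le
  omega

/-- The first row `i` that is too long for the shorter ribbon gives up its excess, and the rest of
the strip is taken as low as possible. -/
lemma IsAdmissible.exists_isPeel_of_not_withinCap (h : IsAdmissible al (l + 1) nu)
    (hal : Antitone al) (h2 : ∀ i < l + 1, 2 ≤ al i) (hm : 0 < nu m) (hm0 : nu (m + 1) = 0)
    (hover : ∃ i < m, ¬ WithinCap al l nu i) :
    ∃ la, IsPeel al l nu m la ∧ ∃ c < m, la c < nu c := by
  classical
  obtain ⟨him, hi⟩ := Nat.find_spec hover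
  have hmin (k : ℕ) (hk : k < Nat.find hover) : WithinCap al l nu k := by
    by_contra hcap
    exact Nat.find_min hover hk ⟨hk.trans him, hcap⟩
  generalize Nat.find hover = i at him hi hmin
  have hml := h.last_le hm
  obtain ⟨d, hd⟩ := Nat.exists_eq_add_of_lt (not_le.1 hi)
  replace hd : nu i + l + ∑ r ∈ range i, al r = ∑ r ∈ range l, al r + i + 1 + (d + 1) := by omega
  obtain ⟨hgap, hle⟩ := h.gap_of_excess hal h2 (by omega) hd
  have hcap := h.withinCap i (by omega)
  rw [WithinCap, sum_range_succ] at hcap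
  rcases le_or_gt (al l) (nu (i + 1) + (d + 1)) with hlow | hlow
  · obtain ⟨y, hy⟩ := Nat.exists_eq_add_of_le (show d + 1 ≤ al l by omega)
    refine ⟨_, h.isPeel_excessPeel h2 hm hm0 him hd hy.symm hgap (by omega) (by omega) hmin,
      i, him, ?_⟩
    simp only [excessPeel, lt_irrefl, if_true, if_false]
    omega
  · refine ⟨_, h.isPeel_greedyPeel hal h2 hm hm0 fun k hk =>
      h.withinCap_greedyPeel_of_excess hal hd hlow hle hmin (by omega), i, him, ?_⟩
    unfold greedyPeel
    omega

lemma IsAdmissible.exists_isPeel {t : ℕ} (h : IsAdmissible al (l + 1) nu) (hal : Antitone al)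
    (h2 : ∀ i < l + 1, 2 ≤ al i) (hm : 0 < nu m) (hm0 : nu (m + 1) = 0)
    (ht : FinishesBy al (l + 1) nu t) :
    ∃ la, IsPeel al l nu m la ∧ ∃ c < t, la c < nu c := by
  have hmt : m ≤ t := by
    by_contra hlt
    rcases ht with ht | ⟨ht, -⟩ <;> have := h.antitone (show t + 1 ≤ m by omega) <;>
      have := h.antitone (Nat.le_add_right t 1) <;> omega
  by_cases hover : ∃ i < m, ¬ WithinCap al l nu i
  · obtain ⟨la, hpeel, c, hc, hlt⟩ := h.exists_isPeel_of_not_withinCap hal h2 hm hm0 hover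
    exact ⟨la, hpeel, c, hc.trans_le hmt, hlt⟩
  push Not at hover
  have greedy := h.isPeel_greedyPeel hal h2 hm hm0 fun i hi => by
    have := (isHorizontalStrip_greedyPeel h.antitone (al l)).le i
    have := hover i hi
    rw [WithinCap] at *
    omega
  rcases ht with ht | ⟨ht, ⟨c, rfl, hc⟩, hbelow⟩
  · refine ⟨_, greedy, m, hmt.lt_of_ne ?_, greedy.lt⟩
    rintro rfl
    omega
  rcases hmt.lt_or_eq with hmt | rfl
  · exact ⟨_, greedy, m, hmt, greedy.lt⟩
  rcases lt_or_ge (nu (c + 1)) (al l) with hlt | hge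
  · obtain ⟨c', hc', hlt'⟩ := h.exists_greedyPeel_lt hal hlt
    exact ⟨_, greedy, c', hc', hlt'⟩
  · refine ⟨_, h.isPeel_cornerPeel h2 ht hc hbelow hge fun i hi => hover i (by omega), c,
      Nat.lt_succ_self c, ?_⟩
    simp only [cornerPeel, if_true]
    omega

lemma IsPeel.finishesBy (h : IsPeel al l nu m la) (hm0 : nu (m + 1) = 0) :
    FinishesBy al l la m := by
  by_cases hz : la m = 0
  · exact .inl hz
  have hbelow := h.belowCap hz
  refine .inr ⟨Nat.eq_zero_of_le_zero ((h.strip.le _).trans hm0.le), ?_, hbelow⟩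
  rcases m with _ | c
  · have hzero (r : ℕ) (hr : 1 ≤ r) : la r = 0 :=
      Nat.eq_zero_of_le_zero ((h.admissible.antitone hr).trans ((h.strip.le 1).trans hm0.le))
    have hl : 1 ≤ l := h.admissible.last_le (Nat.pos_of_ne_zero hz)
    have := h.admissible.sum_eq
    rw [eventually_constant_sum hzero hl, sum_range_one] at this
    rw [BelowCap, sum_range_zero] at hbelow
    omega
  · exact ⟨c, rfl, h.lt.trans_le (h.strip.interlace c)⟩

end Peel

theorem IsAdmissible.stripChain {al nu : ℕ → ℕ} {l t : ℕ} (hal : Antitone al)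
    (h2 : ∀ i < l, 2 ≤ al i) (h : IsAdmissible al l nu) (ht : FinishesBy al l nu t) :
    StripChain ((List.range l).map al) nu t := by
  induction l generalizing nu t with
  | zero =>
    obtain rfl : nu = 0 := funext fun r => h.eq_zero r (Nat.zero_le r)
    exact .nil t
  | succ l ih =>
    have h0 : 0 < nu 0 := by
      have := h.le_zero hal
      have := h2 l (Nat.lt_succ_self l)
      omega
    obtain ⟨m, hm, hm0⟩ := exists_last_pos h0 (h.eq_zero _ le_rfl)
    obtain ⟨la, hpeel, htop⟩ := h.exists_isPeel hal h2 hm hm0 ht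
    have chain := ih (fun i hi => h2 i (by omega)) hpeel.admissible (hpeel.finishesBy hm0)
    rw [List.range_succ, List.map_append, List.map_singleton]
    refine chain.snoc_of_sum_eq hpeel.strip h.eq_zero ?_ ⟨m, le_rfl, hpeel.lt⟩ htop
    rw [h.sum_eq, sum_range_succ]
    rfl

/-! ### Full equivalence class implies full support -/

lemma part_concat (u : List ℕ) (x r : ℕ) :
    part (u ++ [x]) r = part u r + if r = u.length then x else 0 := by
  rcases lt_trichotomy r u.length with hr | rfl | hr
  · rw [if_neg hr.ne, add_zero, part, part, List.getD_append _ _ _ _ hr]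
  · simp [part]
  · rw [part_eq_zero (by simpa using hr), part_eq_zero hr.le, if_neg hr.ne']

lemma IsPartition.sublist {a b : List ℕ} (ha : IsPartition a) (hb : b.Sublist a) :
    IsPartition b :=
  ⟨ha.1.sublist hb, fun x hx => ha.2 x (hb.subset hx)⟩

lemma IsPartition.stripChain {u : List ℕ} (h : IsPartition u) :
    StripChain u (part u) u.length := by
  induction u using List.reverseRecOn with
  | nil => exact .nil 0
  | append_singleton u x ih =>
    have hx : 0 < x := h.2 x (by simp)
    have hlt : part u u.length < part (u ++ [x]) u.length := by
      rw [part_concat, if_pos rfl]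
      omega
    have chain := ih (h.sublist (List.sublist_append_left _ _))
    refine chain.snoc_of_sum_eq (N := (u ++ [x]).length) ⟨fun r => ?_, fun r => ?_⟩
      (fun r hr => part_eq_zero hr) ?_ ⟨u.length, le_rfl, hlt⟩ ⟨u.length, by simp, hlt⟩
    · rw [part_concat]
      exact Nat.le_add_right _ _
    · rcases lt_or_ge r u.length with hr | hr
      · have := h.antitone_part (Nat.le_add_right r 1)
        rwa [part_concat u x r, if_neg hr.ne] at this
      · rw [part_eq_zero (by simpa using hr)]
        exact Nat.zero_le _
    · rw [sum_part_length, List.sum_append, List.sum_singleton]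

/-- Rows of lengths `x > y` can be added in the wrong order: the longer one overlaps the row of
`y` and still leaves `y` boxes for a new row. -/
lemma IsPartition.stripChain_swap {u : List ℕ} {x y : ℕ} (h : IsPartition (u ++ [x] ++ [y]))
    (hxy : y < x) :
    StripChain (u ++ [y] ++ [x]) (part (u ++ [x] ++ [y])) (u.length + 1) := by
  have hux := h.sublist (List.sublist_append_left _ _)
  have hy : 0 < y := h.2 y (by simp)
  have huy := h.sublist ((List.sublist_append_left u [x]).append_right [y])
  have hle (r : ℕ) : part (u ++ [y]) r ≤ part (u ++ [x] ++ [y]) r := by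
    simp only [part_concat]
    split_ifs <;> omega
  have chain := huy.stripChain
  rw [List.length_append, List.length_singleton] at chain
  refine chain.snoc_of_sum_eq (N := (u ++ [x] ++ [y]).length) ⟨hle, fun r => ?_⟩
    (fun r hr => part_eq_zero hr) ?_ ⟨u.length + 1, le_rfl, ?_⟩ ⟨u.length, by omega, ?_⟩
  · have := hux.antitone_part (Nat.le_add_right r 1)
    simp only [part_concat, List.length_append, List.length_singleton] at this ⊢
    rcases lt_trichotomy r u.length with hr | rfl | hr
    · simp only [hr.ne, show r + 1 ≠ u.length + 1 by omega, if_false] at this ⊢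
      omega
    · simp [part_eq_zero]
    · simp [part_eq_zero, hr.le, show u.length ≤ r + 1 by omega, hr.ne',
        show r + 1 ≠ u.length by omega]
  · rw [sum_part_length]
    simp only [List.sum_append, List.sum_singleton]
    omega
  · simp only [part_concat]
    simp [part_eq_zero, hy]
  · simp only [part_concat]
    simp [part_eq_zero, hxy]

lemma StripChain.sum_eq_of_eq_zero {a : List ℕ} {nu : ℕ → ℕ} {t N : ℕ}
    (h : StripChain a nu t) (hN : ∀ r, N ≤ r → nu r = 0) : ∑ r ∈ range N, nu r = a.sum := by
  rw [← h.sum_eq_of_le (le_max_right N _), eventually_constant_sum hN (le_max_left _ _)]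

section Extend

variable {a : List ℕ} {la nu : ℕ → ℕ} {p y : ℕ}

lemma StripChain.exists_concat (chain : StripChain a la (p + 1)) (hnu : Antitone nu)
    (hzero : ∀ r, p + 1 < r → la r = 0) (hle : ∀ r < p + 1, la r ≤ nu r)
    (hdef : ∃ r < p + 1, la r < nu r) (hy : 2 ≤ y) (hroom : la (p + 1) + y ≤ la p + 1) :
    ∃ la', StripChain (a ++ [y]) la' (p + 1) ∧ (∀ r, p + 1 < r → la' r = 0) ∧
      (∀ r < p + 1, la' r ≤ nu r) ∧
      ∑ r ∈ range (p + 1), la' r = ∑ r ∈ range (p + 1), la r + 1 ∧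
      la' (p + 1) + 1 = la (p + 1) + y := by
  classical
  obtain ⟨hjp, hj⟩ := Nat.find_spec hdef
  have hmin (r : ℕ) (hr : r < Nat.find hdef) : nu r ≤ la r := by
    by_contra hlt
    exact Nat.find_min hdef hr ⟨hr.trans hjp, not_le.1 hlt⟩
  generalize Nat.find hdef = j at hjp hj hmin
  let la' (r : ℕ) : ℕ := la r + (if r = j then 1 else 0) + if r = p + 1 then y - 1 else 0
  have sum_la' (k : ℕ) : ∑ r ∈ range k, la' r =
      ∑ r ∈ range k, la r + (if j < k then 1 else 0) + if p + 1 < k then y - 1 else 0 := by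
    simp [la', sum_add_distrib]
  have hzero' (r : ℕ) (hr : p + 1 < r) : la' r = 0 := by
    simp [la', hzero r hr, show r ≠ j by omega, hr.ne']
  have la'_last : la' (p + 1) = la (p + 1) + (y - 1) := by simp [la', hjp.ne']
  refine ⟨la', chain.snoc_of_sum_eq (N := p + 2) ⟨fun r => ?_, fun r => ?_⟩ hzero' ?_
    ⟨p + 1, le_rfl, by omega⟩ ⟨j, hjp, by simp [la', hjp.ne]⟩, hzero', fun r hr => ?_, ?_, by omega⟩
  · simp only [la', add_assoc]
    exact Nat.le_add_right _ _
  · have := chain.antitone (Nat.le_add_right r 1)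
    by_cases hrp : r = p
    · subst hrp
      omega
    · have := hnu (Nat.le_add_right r 1)
      have := hmin r
      have := hle (r + 1)
      simp only [la']
      split_ifs <;> subst_vars <;> omega
  · have := chain.sum_eq_of_eq_zero (N := p + 2) hzero
    rw [sum_la', if_pos (by omega), if_pos (by omega)]
    omega
  · have := hle r hr
    simp only [la']
    split_ifs <;> subst_vars <;> omega
  · simp [sum_la', hjp]

lemma StripChain.concat_of_eq (chain : StripChain a la (p + 1)) (hnu : Antitone nu)
    (hzero : ∀ r, p + 1 < r → la r = 0) (hnu_zero : ∀ r, p + 1 < r → nu r = 0)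
    (heq : ∀ r < p + 1, la r = nu r) (hy : 0 < y) (hlast : nu (p + 1) = la (p + 1) + y) :
    StripChain (a ++ [y]) nu (p + 2) := by
  refine chain.snoc_of_sum_eq (N := p + 2) ⟨fun r => ?_, fun r => ?_⟩ hnu_zero ?_
    ⟨p + 1, le_rfl, by omega⟩ ⟨p + 1, by omega, by omega⟩
  · rcases lt_trichotomy r (p + 1) with hr | rfl | hr
    · exact (heq r hr).le
    · omega
    · rw [hzero r hr]
      exact Nat.zero_le _
  · rcases lt_or_ge r (p + 1) with hr | hr
    · exact (hnu (Nat.le_add_right r 1)).trans (heq r hr).ge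
    · rw [hnu_zero (r + 1) (by omega)]
      exact Nat.zero_le _
  · rw [← chain.sum_eq_of_eq_zero (N := p + 2) hzero, sum_range_succ, sum_range_succ la, hlast,
      sum_congr rfl fun r hr => (heq r (mem_range.1 hr)).symm, add_assoc]

/-- Each row of `l` but the last puts one box into the rows `0, …, p` and its other boxes into row
`p + 1`; the last one goes entirely into row `p + 1`. -/
lemma StripChain.exists_append {l : List ℕ} (chain : StripChain a la (p + 1))
    (hnu : Antitone nu) (hnu_zero : ∀ r, p + 1 < r → nu r = 0)
    (hzero : ∀ r, p + 1 < r → la r = 0) (hle : ∀ r < p + 1, la r ≤ nu r) (hl : PartsGE l 2)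
    (hsum : ∑ r ∈ range (p + 1), nu r + 1 = ∑ r ∈ range (p + 1), la r + l.length)
    (hlast : la (p + 1) + l.sum + 1 = nu (p + 1) + l.length) :
    ∃ t, StripChain (a ++ l) nu t := by
  have hle_sum : ∑ r ∈ range (p + 1), la r ≤ ∑ r ∈ range (p + 1), nu r :=
    sum_le_sum fun r hr => hle r (mem_range.1 hr)
  induction l generalizing a la with
  | nil =>
    simp only [List.length_nil] at hsum
    omega
  | cons y l ih =>
    have hy : 2 ≤ y := hl y (by simp)
    have hl' : PartsGE l 2 := fun z hz => hl z (by simp [hz])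
    simp only [List.length_cons, List.sum_cons] at hsum hlast
    rcases eq_or_ne l [] with rfl | hne
    · simp only [List.length_nil, List.sum_nil] at hsum hlast
      have heq := (sum_eq_sum_iff_of_le fun r hr => hle r (mem_range.1 hr)).1
        (show ∑ r ∈ range (p + 1), la r = ∑ r ∈ range (p + 1), nu r by omega)
      exact ⟨_, chain.concat_of_eq hnu hzero hnu_zero (fun r hr => heq r (mem_range.2 hr))
        (by omega) (by omega)⟩
    · have hlen : 0 < l.length := List.length_pos_iff.2 hne
      have hlsum : l.length * 2 ≤ l.sum := List.card_nsmul_le_sum l 2 hl'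
      obtain ⟨j, hj, hlt⟩ := exists_lt_of_sum_lt
        (show ∑ r ∈ range (p + 1), la r < ∑ r ∈ range (p + 1), nu r by omega)
      have hroom : la (p + 1) + y ≤ la p + 1 := by
        have : ∑ r ∈ range p, la r ≤ ∑ r ∈ range p, nu r :=
          sum_le_sum fun r hr => hle r (by have := mem_range.1 hr; omega)
        have := hnu (Nat.le_add_right p 1)
        rw [sum_range_succ, sum_range_succ la] at hsum
        omega
      obtain ⟨la', chain', hzero', hle', hsum', hlast'⟩ :=
        chain.exists_concat hnu hzero hle ⟨j, mem_range.1 hj, hlt⟩ hy hroom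
      have := ih chain' hzero' hle' hl' (by omega) (by omega)
        (sum_le_sum fun r hr => hle' r (mem_range.1 hr))
      rwa [List.append_assoc, List.singleton_append] at this

end Extend

lemma sum_max_le {al f : ℕ → ℕ} {R k : ℕ} (hal : Antitone al) (hf : ∀ r < k, R ≤ f r)
    (hdom : ∀ j ≤ k, ∑ r ∈ range j, al r ≤ ∑ r ∈ range j, f r) :
    ∑ r ∈ range k, max (al r) R ≤ ∑ r ∈ range k, f r := by
  induction k with
  | zero => simp
  | succ k ih =>
    rcases le_total R (al k) with hR | hR
    · refine le_of_eq_of_le (sum_congr rfl fun r hr => max_eq_left (hR.trans (hal ?_)))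
        (hdom _ le_rfl)
      exact Nat.lt_succ_iff.1 (mem_range.1 hr)
    · rw [sum_range_succ, sum_range_succ, max_eq_right hR]
      exact Nat.add_le_add (ih (fun r hr => hf r (by omega)) fun j hj => hdom j (by omega))
        (hf k (by omega))

/-- With `R` one more than the cap of row `p + 1`, the rows of `nu` are `max (al r) R` for `r ≤ p`,
then `R`; all remaining boxes go into row `0`. -/
lemma Dominates.exists_shape_of_not_withinCap {al f : ℕ → ℕ} {l p : ℕ} (h : Dominates al l f)
    (hal : Antitone al) (h2 : ∀ i < l, 2 ≤ al i) (hp : p + 2 < l)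
    (hover : ¬ WithinCap al l f (p + 1)) :
    al (p + 1) < al p ∧ ∃ nu, Antitone nu ∧ (∀ r, p + 1 < r → nu r = 0) ∧
      (∀ r < p + 1, al r ≤ nu r) ∧
      ∑ r ∈ range (p + 1), nu r + p + 3 = ∑ r ∈ range (p + 1), al r + l ∧
      nu (p + 1) + l + ∑ r ∈ range (p + 1), al r = ∑ r ∈ range l, al r + p + 3 := by
  rw [WithinCap] at hover
  have hgrow := sum_range_add_mul_le hp.le fun r _ hr => h2 r hr
  rw [sum_range_succ] at hgrow
  obtain ⟨R, hR⟩ : ∃ R, R + l + ∑ r ∈ range (p + 1), al r = ∑ r ∈ range l, al r + p + 3 :=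
    ⟨∑ r ∈ range l, al r + p + 3 - (l + ∑ r ∈ range (p + 1), al r), by omega⟩
  have hmax := sum_max_le (R := R) (k := p + 1) hal
    (fun r hr => le_trans (by omega) (h.antitone hr.le)) fun j hj => h.sum_le j (by omega)
  have htotal := sum_le_sum_of_subset (f := f) (range_subset_range.2 hp.le)
  rw [sum_range_succ, h.sum_eq] at htotal
  obtain ⟨E, hE⟩ : ∃ E, ∑ r ∈ range (p + 1), max (al r) R + E + R = ∑ r ∈ range l, al r :=
    ⟨∑ r ∈ range l, al r - R - ∑ r ∈ range (p + 1), max (al r) R, by omega⟩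
  refine ⟨?_, fun r => if p + 1 < r then 0 else max (al r) R + if r = 0 then E else 0,
    antitone_nat_of_succ_le fun r => ?_, fun r hr => if_pos hr, fun r hr => ?_, ?_, ?_⟩
  · have hp_sum : ∑ r ∈ range p, al r ≤ ∑ r ∈ range p, max (al r) R :=
      sum_le_sum fun r _ => le_max_left _ _
    rw [sum_range_succ] at hE hR hgrow
    have := le_max_right (al p) R
    omega
  · have := hal (Nat.le_add_right r 1)
    simp only [Nat.add_eq_zero_iff, one_ne_zero, and_false, if_false]
    split_ifs <;> omega
  · simp only [if_neg (show ¬ p + 1 < r by omega)]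
    exact (le_max_left _ _).trans (Nat.le_add_right _ _)
  · have hsum : ∑ r ∈ range (p + 1), (if p + 1 < r then 0 else max (al r) R +
        if r = 0 then E else 0) = ∑ r ∈ range (p + 1), max (al r) R + E := by
      rw [sum_congr rfl fun r hr => if_neg (by have := mem_range.1 hr; omega), sum_add_distrib]
      simp
    simp only [hsum]
    omega
  · simp only [if_neg (lt_irrefl _), if_neg (Nat.succ_ne_zero p),
      max_eq_right (show al (p + 1) ≤ R by omega)]
    omega

lemma IsPartition.exists_stripChain_swap {u v : List ℕ} {x y : ℕ} {nu : ℕ → ℕ}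
    (h : IsPartition (u ++ [x] ++ [y])) (hxy : y < x) (hv : PartsGE v 2) (hnu : Antitone nu)
    (hnu_zero : ∀ r, u.length + 1 < r → nu r = 0)
    (hle : ∀ r < u.length + 1, part (u ++ [x] ++ [y] ++ v) r ≤ nu r)
    (hsum : ∑ r ∈ range (u.length + 1), nu r + 1 =
      ∑ r ∈ range (u.length + 1), part (u ++ [x] ++ [y] ++ v) r + v.length)
    (hlast : ∑ r ∈ range (u.length + 1), part (u ++ [x] ++ [y] ++ v) r + nu (u.length + 1) +
      v.length = (u ++ [x] ++ [y] ++ v).sum + 1) :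
    ∃ t, StripChain (u ++ [y] ++ [x] ++ v) nu t := by
  have hrow (r : ℕ) (hr : r < u.length + 1) :
      part (u ++ [x] ++ [y]) r = part (u ++ [x] ++ [y] ++ v) r :=
    (List.getD_append _ _ _ _ (by simp; omega)).symm
  have hrows : ∑ r ∈ range (u.length + 1), part (u ++ [x] ++ [y] ++ v) r = (u ++ [x]).sum := by
    rw [sum_part, List.append_assoc (u ++ [x]), List.take_left' (by simp)]
  rw [hrows] at hsum hlast
  refine (h.stripChain_swap hxy).exists_append hnu hnu_zero (fun r hr => part_eq_zero ?_)
    (fun r hr => (hrow r hr).trans_le (hle r hr)) hv ?_ ?_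
  · simp only [List.length_append, List.length_singleton]
    omega
  · rw [sum_congr rfl fun r hr => hrow r (mem_range.1 hr), hrows, hsum]
  · have : part (u ++ [x] ++ [y]) (u.length + 1) = y := by
      rw [part_concat, part_eq_zero (by simp), if_pos (by simp), zero_add]
    simp only [List.sum_append, List.sum_singleton] at hlast ⊢
    omega

lemma map_part_range (a : List ℕ) : (List.range a.length).map (part a) = a :=
  List.ext_getElem (by simp) fun r _ hr => by simp [part, hr]

lemma exists_eq_concat_concat_append {a : List ℕ} {p : ℕ} (hp : p + 1 < a.length) :
    ∃ u v, u.length = p ∧ u ++ [part a p] ++ [part a (p + 1)] ++ v = a := by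
  have hp' := Nat.lt_of_succ_lt hp
  exact ⟨a.take p, a.drop (p + 2), List.length_take_of_le (by omega), by simp [part, hp, hp']⟩

lemma FullEquivClass.withinCap {a : List ℕ} {f : ℕ → ℕ} {i : ℕ} (h : FullEquivClass a)
    (ha : IsPartition a) (h2 : PartsGE a 2) (hf : Dominates (part a) a.length f)
    (hcap : WithinCap (part a) a.length f 0) (hi : i < a.length) :
    WithinCap (part a) a.length f i := by
  by_contra hover
  obtain ⟨p, rfl⟩ : ∃ p, i = p + 1 :=
    Nat.exists_eq_add_one_of_ne_zero (by rintro rfl; exact hover hcap)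
  have hp : p + 2 < a.length := by
    refine lt_of_le_of_ne hi fun hlen => hover ?_
    have hle := hf.sum_le (p + 1) (by omega)
    have hsum := hf.sum_eq
    rw [← hlen, sum_range_succ f] at hsum
    rw [WithinCap, ← hlen]
    omega
  obtain ⟨hlt, nu, hnu, hnu_zero, hle, hsum, hlast⟩ :=
    hf.exists_shape_of_not_withinCap ha.antitone_part (fun i hi => le_part h2 hi) hp hover
  obtain ⟨u, v, rfl, split⟩ := exists_eq_concat_concat_append hi
  generalize part a u.length = x at split hlt
  generalize part a (u.length + 1) = y at split hlt
  subst split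
  have hlen : (u ++ [x] ++ [y] ++ v).length = u.length + 2 + v.length := by simp; omega
  rw [sum_part_length] at hlast
  obtain ⟨t, swapped⟩ := (ha.sublist (List.sublist_append_left _ _)).exists_stripChain_swap hlt
    (fun z hz => h2 z (by simp [hz])) hnu hnu_zero hle (by omega) (by omega)
  have hperm : (u ++ [y] ++ [x] ++ v).Perm (u ++ [x] ++ [y] ++ v) := by
    simpa using (List.Perm.swap x y v).append_left u
  obtain ⟨t, chain⟩ := ((fullEquivClass_iff ha.2).1 h _ hperm nu).1 ⟨t, swapped⟩
  have := chain.withinCap hi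
  rw [WithinCap, sum_part_length] at this
  omega

lemma fullSupportConn_of_fullEquivClass {a : List ℕ} (ha : IsPartition a) (h2 : PartsGE a 2)
    (hne : a ≠ []) (h : FullEquivClass a) : FullSupportConn a := by
  rw [fullSupportConn_iff ha.2 hne]
  intro f hf hcap
  have chain := IsAdmissible.stripChain ha.antitone_part (fun i hi => le_part h2 hi)
    ⟨hf, fun i hi => h.withinCap ha h2 hf hcap hi⟩ (.inl (hf.eq_zero _ le_rfl))
  rw [map_part_range] at chain
  exact ⟨_, chain⟩

/-! ### Ribbons with at most four rows -/

/-- The shape `nu` dominates every rearrangement of the rows `b`. -/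
structure Majorizes (b : List ℕ) (nu : ℕ → ℕ) : Prop where
  antitone : Antitone nu
  eq_zero : ∀ r, b.length ≤ r → nu r = 0
  sum_eq : ∑ r ∈ range b.length, nu r = b.sum
  sum_le : ∀ l : List ℕ, l.Sublist b → l.sum ≤ ∑ r ∈ range l.length, nu r

lemma Dominates.majorizes {a b : List ℕ} {f : ℕ → ℕ} (h : Dominates (part a) a.length f)
    (ha : IsPartition a) (hba : b.Perm a) : Majorizes b f where
  antitone := h.antitone
  eq_zero r hr := h.eq_zero r (hba.length_eq.symm.trans_le hr)
  sum_eq := by rw [hba.length_eq, h.sum_eq, sum_part_length, hba.sum_eq]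
  sum_le l hl := by
    have hla := hl.subperm.trans hba.subperm
    exact (ha.stripChain.sum_le_of_subperm hla).trans (h.sum_le _ hla.length_le)

lemma FullSupportConn.withinCap {a : List ℕ} {f : ℕ → ℕ} {i : ℕ} (h : FullSupportConn a)
    (ha : ∀ y ∈ a, 0 < y) (hf : Dominates (part a) a.length f)
    (hcap : WithinCap (part a) a.length f 0) (hi : i < a.length) :
    WithinCap (part a) a.length f i := by
  obtain ⟨t, chain⟩ := (fullSupportConn_iff ha (List.ne_nil_of_length_pos (by omega))).1 h f hf hcap
  exact chain.withinCap hi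

lemma FullSupportConn.fullEquivClass {a : List ℕ} (h : FullSupportConn a) (ha : IsPartition a)
    (hne : a ≠ []) (hchain : ∀ b f, b.Perm a → Majorizes b f → f 0 + b.length ≤ b.sum + 1 →
      ∃ t, StripChain b f t) : FullEquivClass a := by
  rw [fullEquivClass_iff ha.2]
  rw [fullSupportConn_iff ha.2 hne] at h
  refine fun b hba f => ⟨fun ⟨t, ht⟩ => ?_, fun ⟨t, ht⟩ => ?_⟩
  · refine h f (ht.dominates hba) ?_
    have := ht.withinCap (hba.length_eq.symm ▸ List.length_pos_iff.2 hne)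
    rwa [WithinCap, sum_part_length, hba.length_eq, hba.sum_eq, ← sum_part_length] at this
  · refine hchain b f hba ((ht.dominates (.refl a)).majorizes ha hba) ?_
    have := ht.withinCap (List.length_pos_iff.2 hne)
    rw [WithinCap, sum_part_length] at this
    rw [hba.length_eq, hba.sum_eq]
    simpa using this

lemma exists_eq_part {f : ℕ → ℕ} (h : ∀ r, 4 ≤ r → f r = 0) :
    ∃ x₁ x₂ x₃ x₄, f = part [x₁, x₂, x₃, x₄] := by
  refine ⟨f 0, f 1, f 2, f 3, ?_⟩
  funext r
  rcases r with _ | _ | _ | _ | r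
  exacts [rfl, rfl, rfl, rfl, h _ (by omega)]

lemma StripChain.concat_part {a : List ℕ} {l₀ l₁ l₂ l₃ n₀ n₁ n₂ n₃ s t x : ℕ}
    (chain : StripChain a (part [l₀, l₁, l₂, l₃]) s)
    (hle : l₀ ≤ n₀ ∧ l₁ ≤ n₁ ∧ l₂ ≤ n₂ ∧ l₃ ≤ n₃) (hinterlace : n₁ ≤ l₀ ∧ n₂ ≤ l₁ ∧ n₃ ≤ l₂)
    (hsum : n₀ + n₁ + n₂ + n₃ = l₀ + l₁ + l₂ + l₃ + x)
    (hge : s ≤ 0 ∧ l₀ < n₀ ∨ s ≤ 1 ∧ l₁ < n₁ ∨ s ≤ 2 ∧ l₂ < n₂ ∨ s ≤ 3 ∧ l₃ < n₃)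
    (hlt : 0 < t ∧ l₀ < n₀ ∨ 1 < t ∧ l₁ < n₁ ∨ 2 < t ∧ l₂ < n₂ ∨ 3 < t ∧ l₃ < n₃) :
    StripChain (a ++ [x]) (part [n₀, n₁, n₂, n₃]) t := by
  have hl := chain.sum_eq_of_eq_zero (N := 4) fun r hr => part_eq_zero hr
  refine chain.snoc_of_sum_eq (N := 4) ⟨fun r => ?_, fun r => ?_⟩ (fun r hr => part_eq_zero hr)
    ?_ ?_ ?_
  · rcases r with _ | _ | _ | _ | r <;> simp [part, hle]
  · rcases r with _ | _ | _ | _ | r <;> simp [part, hinterlace]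
  · rw [← hl]
    simpa [sum_range_succ, part] using hsum
  · rcases hge with h | h | h | h
    exacts [⟨0, h⟩, ⟨1, h⟩, ⟨2, h⟩, ⟨3, h⟩]
  · rcases hlt with h | h | h | h
    exacts [⟨0, h⟩, ⟨1, h⟩, ⟨2, h⟩, ⟨3, h⟩]

lemma stripChain_two {p q x y t : ℕ} (hsum : x + y = p + q) (hy : 0 < y) (hyp : y ≤ p)
    (hyq : y ≤ q) (ht : 2 ≤ t ∨ 1 ≤ t ∧ y < q) : StripChain [p, q] (part [x, y, 0, 0]) t := by
  have nil : StripChain [] (part [0, 0, 0, 0]) 0 := by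
    have : part [0, 0, 0, 0] = 0 := by
      funext r
      rcases r with _ | _ | _ | _ | r <;> rfl
    exact this ▸ .nil 0
  have one : StripChain [p] (part [p, 0, 0, 0]) 1 := nil.concat_part (by omega) (by omega)
    (by omega) (by omega) (by omega)
  exact one.concat_part (by omega) (by omega) (by omega) (by omega) (by omega)

lemma stripChain_three {p q s x y z t : ℕ} (hsum : x + y + z = p + q + s) (hxy : y ≤ x)
    (hyz : z ≤ y) (hz : 0 < z) (hx : p ≤ x ∧ q ≤ x ∧ s ≤ x) (hz_le : z ≤ p ∧ z ≤ q ∧ z ≤ s)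
    (ht : 3 ≤ t ∨ 2 ≤ t ∧ z < s) : StripChain [p, q, s] (part [x, y, z, 0]) t := by
  obtain ⟨m, hm⟩ : ∃ m, z ≤ m ∧ p + q ≤ x + m ∧ m ≤ p ∧ m ≤ q ∧ m ≤ y ∧ m + y ≤ p + q :=
    ⟨max z (p + q - x), by omega⟩
  have two : StripChain [p, q] (part [p + q - m, m, 0, 0]) 2 :=
    stripChain_two (by omega) (by omega) (by omega) (by omega) (by omega)
  exact two.concat_part (by omega) (by omega) (by omega) (by omega) (by omega)

lemma stripChain_three_of_two_rows {p q s x y t : ℕ} (hp : 0 < p) (hq : 2 ≤ q) (hs : 2 ≤ s)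
    (hsum : x + y = p + q + s) (hxy : y ≤ x) (hy : 2 ≤ y) (hx : p < x ∧ q ≤ x ∧ s < x)
    (ht : 2 ≤ t ∨ 1 ≤ t ∧ p + 1 < x ∧ q < x ∧ y < x) :
    StripChain [p, q, s] (part [x, y, 0, 0]) t := by
  obtain ⟨m, hm⟩ : ∃ m, 0 < m ∧ m ≤ p ∧ m < q ∧ m < y ∧ m + y ≤ p + q ∧
      p + q ≤ x + m ∧ (1 < t ∨ p + q < x + m) := by
    rcases ht with ht | ht
    · exact ⟨max 1 (p + q - x), by omega⟩
    · exact ⟨max 1 (p + q + 1 - x), by omega⟩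
  have two : StripChain [p, q] (part [p + q - m, m, 0, 0]) 1 :=
    stripChain_two (by omega) (by omega) (by omega) (by omega) (by omega)
  exact two.concat_part (by omega) (by omega) (by omega) (by omega) (by omega)

lemma exists_stripChain_three {p q s x₁ x₂ x₃ c d t : ℕ} (hc : 0 < c) (hcd : c ≤ d)
    (hx : x₃ ≤ x₂ ∧ x₂ ≤ x₁) (hx₁ : p ≤ x₁ ∧ q ≤ x₁ ∧ s ≤ x₁)
    (hd : d ≤ x₃ ∧ d ≤ p ∧ d ≤ q ∧ d ≤ s)
    (hcx : c + x₃ + x₂ ≤ p + q + s ∧ c + x₃ ≤ p + q ∧ c + x₃ ≤ p + s ∧ c + x₃ ≤ q + s)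
    (hdx : p + q + s ≤ d + x₂ + x₁) (ht : 3 ≤ t ∨ 2 ≤ t ∧ d < s) :
    ∃ u v, (c ≤ u ∧ u ≤ d) ∧ (x₃ ≤ v ∧ v ≤ x₂) ∧
      (p + q + s ≤ u + v + x₁ ∧ u + v + x₂ ≤ p + q + s) ∧
      StripChain [p, q, s] (part [p + q + s - (u + v), v, u, 0]) t := by
  obtain ⟨u, hu⟩ : ∃ u, u = max c (p + q + s - x₁ - x₂) := ⟨_, rfl⟩
  obtain ⟨v, hv⟩ : ∃ v, v = max x₃ (p + q + s - x₁ - u) := ⟨_, rfl⟩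
  refine ⟨u, v, by omega, by omega, by omega, stripChain_three ?_ ?_ ?_ ?_ ?_ ?_ ?_⟩ <;> omega

section FewRows

variable {p q s w x₁ x₂ x₃ x₄ : ℕ}

lemma Majorizes.inequalities_three (h : Majorizes [p, q, s] (part [x₁, x₂, x₃, x₄])) :
    x₄ = 0 ∧ (x₂ ≤ x₁ ∧ x₃ ≤ x₂) ∧ x₁ + x₂ + x₃ = p + q + s ∧
      (p ≤ x₁ ∧ q ≤ x₁ ∧ s ≤ x₁) ∧ x₃ ≤ p ∧ x₃ ≤ q ∧ x₃ ≤ s := by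
  have h₁ := h.antitone (Nat.le_add_right 0 1)
  have h₂ := h.antitone (Nat.le_add_right 1 1)
  have hsum := h.sum_eq
  have hle := h.sum_le
  simp only [← List.mem_sublists'] at hle
  simp [part, sum_range_succ, List.sublists'_cons] at h₁ h₂ hsum hle
  exact ⟨h.eq_zero 3 le_rfl, by omega, by omega, by omega, by omega⟩

lemma Majorizes.inequalities_four (h : Majorizes [p, q, s, w] (part [x₁, x₂, x₃, x₄])) :
    (x₂ ≤ x₁ ∧ x₃ ≤ x₂ ∧ x₄ ≤ x₃) ∧ x₁ + x₂ + x₃ + x₄ = p + q + s + w ∧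
      (p ≤ x₁ ∧ q ≤ x₁ ∧ s ≤ x₁ ∧ w ≤ x₁) ∧
      (p + q ≤ x₁ + x₂ ∧ p + s ≤ x₁ + x₂ ∧ p + w ≤ x₁ + x₂ ∧
        q + s ≤ x₁ + x₂ ∧ q + w ≤ x₁ + x₂ ∧ s + w ≤ x₁ + x₂) ∧
      x₄ ≤ p ∧ x₄ ≤ q ∧ x₄ ≤ s ∧ x₄ ≤ w := by
  have h₁ := h.antitone (Nat.le_add_right 0 1)
  have h₂ := h.antitone (Nat.le_add_right 1 1)
  have h₃ := h.antitone (Nat.le_add_right 2 1)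
  have hsum := h.sum_eq
  have hle := h.sum_le
  simp only [← List.mem_sublists'] at hle
  simp [part, sum_range_succ, List.sublists'_cons] at h₁ h₂ h₃ hsum hle
  refine ⟨by omega, by omega, by omega, by omega, by omega⟩

lemma Majorizes.exists_stripChain_of_four_parts
    (h : Majorizes [p, q, s, w] (part [x₁, x₂, x₃, x₄])) (hx₄ : 0 < x₄) :
    ∃ t, StripChain [p, q, s, w] (part [x₁, x₂, x₃, x₄]) t := by
  have hle := h.inequalities_four
  obtain ⟨u, v, hu, hv, huv, three⟩ := exists_stripChain_three (p := p) (q := q) (s := s)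
    (x₁ := x₁) (x₂ := x₂) (x₃ := x₃) (c := x₄) (d := min x₃ (min p (min q s))) (t := 3)
    hx₄ (by omega) (by omega) (by omega) (by omega) (by omega) (by omega) (by omega)
  exact ⟨4, three.concat_part (by omega) (by omega) (by omega) (by omega) (by omega)⟩

lemma Majorizes.pair_lt (h : Majorizes [p, q, s, w] (part [x₁, x₂, x₃, 0]))
    (hpair : [p, q, s, w].Pairwise fun x y => min x y + x + y < [p, q, s, w].sum) :
    p + q < x₁ + x₂ ∧ p + s < x₁ + x₂ ∧ p + w < x₁ + x₂ ∧
      q + s < x₁ + x₂ ∧ q + w < x₁ + x₂ ∧ s + w < x₁ + x₂ := by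
  have hle := h.inequalities_four
  simp only [List.pairwise_cons, List.mem_cons, forall_eq_or_imp, List.not_mem_nil,
    List.sum_cons, List.sum_nil, false_imp_iff, implies_true] at hpair
  omega

lemma Majorizes.exists_stripChain_of_three_parts
    (h : Majorizes [p, q, s, w] (part [x₁, x₂, x₃, 0])) (h2 : PartsGE [p, q, s, w] 2)
    (hpair : [p, q, s, w].Pairwise fun x y => min x y + x + y < [p, q, s, w].sum)
    (hx₃ : 2 ≤ x₃) (hw : w < x₁) :
    ∃ t, StripChain [p, q, s, w] (part [x₁, x₂, x₃, 0]) t := by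
  have hle := h.inequalities_four
  have hlt := h.pair_lt hpair
  simp only [PartsGE, List.forall_mem_cons] at h2
  obtain ⟨u, v, hu, hv, huv, three⟩ := exists_stripChain_three (p := p) (q := q) (s := s)
    (x₁ := x₁) (x₂ := x₂) (x₃ := x₃) (c := 1) (d := min (x₃ - 1) (min p (min q (s - 1)))) (t := 2)
    one_pos (by omega) (by omega) (by omega) (by omega) (by omega) (by omega) (by omega)
  exact ⟨3, three.concat_part (by omega) (by omega) (by omega) (by omega) (by omega)⟩

lemma Majorizes.exists_stripChain_of_three_parts_of_short
    (h : Majorizes [p, q, s, w] (part [x₁, x₂, x₃, 0])) (h2 : PartsGE [p, q, s, w] 2)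
    (hpair : [p, q, s, w].Pairwise fun x y => min x y + x + y < [p, q, s, w].sum)
    (hmem : ∀ y ∈ [p, q, s, w], 2 * y + 3 ≤ [p, q, s, w].sum)
    (hcap : x₁ + 3 ≤ [p, q, s, w].sum) (hshort : x₃ = 1 ∨ w = x₁) :
    ∃ t, StripChain [p, q, s, w] (part [x₁, x₂, x₃, 0]) t := by
  have hle := h.inequalities_four
  have hlt := h.pair_lt hpair
  simp only [PartsGE, List.forall_mem_cons, List.sum_cons, List.sum_nil] at h2 hmem hcap
  obtain ⟨v, hv⟩ : ∃ v, v = max 2 (max x₃ (p + q + s - x₁)) := ⟨_, rfl⟩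
  have three : StripChain [p, q, s] (part [p + q + s - v, v, 0, 0]) 2 :=
    stripChain_three_of_two_rows (by omega) (by omega) (by omega) (by omega) (by omega)
      (by omega) (by omega) (by omega)
  exact ⟨3, three.concat_part (by omega) (by omega) (by omega) (by omega) (by omega)⟩

lemma Majorizes.exists_stripChain_of_two_parts
    (h : Majorizes [p, q, s, w] (part [x₁, x₂, 0, 0])) (h2 : PartsGE [p, q, s, w] 2)
    (hmem : ∀ y ∈ [p, q, s, w], 2 * y + 3 ≤ [p, q, s, w].sum)
    (hcap : x₁ + 3 ≤ [p, q, s, w].sum) :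
    ∃ t, StripChain [p, q, s, w] (part [x₁, x₂, 0, 0]) t := by
  have hle := h.inequalities_four
  simp only [PartsGE, List.forall_mem_cons, List.sum_cons, List.sum_nil] at h2 hmem hcap
  obtain ⟨v, hv⟩ : ∃ v, v = max 2 (p + q + s - x₁) := ⟨_, rfl⟩
  have three : StripChain [p, q, s] (part [p + q + s - v, v, 0, 0]) 1 :=
    stripChain_three_of_two_rows (by omega) (by omega) (by omega) (by omega) (by omega)
      (by omega) (by omega) (by omega)
  exact ⟨2, three.concat_part (by omega) (by omega) (by omega) (by omega) (by omega)⟩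

end FewRows
lemma Majorizes.exists_stripChain_of_length_three {b : List ℕ} {f : ℕ → ℕ} (h : Majorizes b f)
    (hb : b.length = 3) (h2 : PartsGE b 2) (hcap : f 0 + 2 ≤ b.sum)
    (hmem : ∀ y ∈ b, 2 * y < b.sum) : ∃ t, StripChain b f t := by
  obtain ⟨p, q, s, rfl⟩ := List.length_eq_three.1 hb
  obtain ⟨x₁, x₂, x₃, x₄, rfl⟩ := exists_eq_part fun r hr => h.eq_zero r (hr.trans' (by simp))
  obtain ⟨rfl, hle⟩ := h.inequalities_three
  simp only [PartsGE, List.forall_mem_cons, List.sum_cons, List.sum_nil] at h2 hmem hcap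
  rw [part, List.getD_cons_zero] at hcap
  rcases Nat.eq_zero_or_pos x₃ with rfl | hx₃
  · exact ⟨2, stripChain_three_of_two_rows (by omega) (by omega) (by omega) (by omega) (by omega)
      (by omega) (by omega) (by omega)⟩
  · exact ⟨3, stripChain_three (by omega) (by omega) (by omega) hx₃ (by omega) (by omega)
      (by omega)⟩

lemma Majorizes.exists_stripChain_of_length_four {b : List ℕ} {f : ℕ → ℕ} (h : Majorizes b f)
    (hb : b.length = 4) (h2 : PartsGE b 2) (hcap : f 0 + 3 ≤ b.sum)
    (hmem : ∀ y ∈ b, 2 * y + 3 ≤ b.sum) (hpair : b.Pairwise fun x y => min x y + x + y < b.sum) :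
    ∃ t, StripChain b f t := by
  obtain ⟨p, q, s, w, rfl⟩ := List.length_eq_four.1 hb
  obtain ⟨x₁, x₂, x₃, x₄, rfl⟩ := exists_eq_part h.eq_zero
  rw [part, List.getD_cons_zero] at hcap
  have hle := h.inequalities_four
  rcases Nat.eq_zero_or_pos x₄ with rfl | hx₄
  · rcases Nat.eq_zero_or_pos x₃ with rfl | hx₃
    · exact h.exists_stripChain_of_two_parts h2 hmem hcap
    by_cases hshort : x₃ = 1 ∨ w = x₁
    · exact h.exists_stripChain_of_three_parts_of_short h2 hpair hmem hcap hshort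
    · exact h.exists_stripChain_of_three_parts h2 hpair (by omega) (by omega)
  · exact h.exists_stripChain_of_four_parts hx₄

lemma FullSupportConn.lt_add_of_length_three {x y z : ℕ} (h : FullSupportConn [x, y, z])
    (ha : IsPartition [x, y, z]) (h2 : PartsGE [x, y, z] 2) : x < y + z := by
  simp only [PartsGE, List.forall_mem_cons] at h2
  by_contra! hx
  have hdom : DomLE [x, y, z] [x, y + z] := by
    refine ⟨by simp, fun k => ?_⟩
    rcases k with _ | _ | _ | k <;> simp [← add_assoc]
  have hpart : IsPartition [x, y + z] := by simp [IsPartition]; omega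
  have := h.withinCap (i := 1) ha.2 ((domLE_iff_dominates hpart).1 hdom)
    (by simp [WithinCap, sum_range_succ, part]; omega) (by simp)
  simp [WithinCap, sum_range_succ, part] at this
  omega

lemma FullSupportConn.add_three_le_of_length_four {x y z w : ℕ}
    (h : FullSupportConn [x, y, z, w]) (ha : IsPartition [x, y, z, w])
    (h2 : PartsGE [x, y, z, w] 2) : x + 3 ≤ y + z + w := by
  simp only [PartsGE, List.forall_mem_cons] at h2
  by_contra! hx
  have hsum : x + 1 + (y + z + w - 1) = x + y + z + w := by omega
  have hdom : DomLE [x, y, z, w] [x + 1, y + z + w - 1] := by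
    refine ⟨by simp; omega, fun k => ?_⟩
    rcases k with _ | _ | _ | _ | k <;> simp <;> omega
  have hpart : IsPartition [x + 1, y + z + w - 1] := by simp [IsPartition]; omega
  have := h.withinCap (i := 1) ha.2 ((domLE_iff_dominates hpart).1 hdom)
    (by simp [WithinCap, sum_range_succ, part]; omega) (by simp)
  simp [WithinCap, sum_range_succ, part] at this
  omega

lemma FullSupportConn.second_lt_add_of_length_four {x y z w : ℕ}
    (h : FullSupportConn [x, y, z, w]) (ha : IsPartition [x, y, z, w])
    (h2 : PartsGE [x, y, z, w] 2) : y < z + w := by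
  simp only [PartsGE, List.forall_mem_cons] at h2
  by_contra! hy
  have hdom : DomLE [x, y, z, w] [x, y, z + w] := by
    refine ⟨by simp, fun k => ?_⟩
    rcases k with _ | _ | _ | _ | k <;> simp [← add_assoc]
  have hpart : IsPartition [x, y, z + w] := by
    simp [IsPartition] at ha ⊢
    omega
  have := h.withinCap (i := 2) ha.2 ((domLE_iff_dominates hpart).1 hdom)
    (by simp [WithinCap, sum_range_succ, part]; omega) (by simp)
  simp [WithinCap, sum_range_succ, part] at this
  omega

lemma FullSupportConn.fullEquivClass_of_length_three {a : List ℕ} (h : FullSupportConn a)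
    (ha : IsPartition a) (h2 : PartsGE a 2) (hl : a.length = 3) : FullEquivClass a := by
  have hmem : ∀ y ∈ a, 2 * y < a.sum := by
    obtain ⟨x, y, z, rfl⟩ := List.length_eq_three.1 hl
    have hx := h.lt_add_of_length_three ha h2
    have := ha.1
    simp at this ⊢
    omega
  refine h.fullEquivClass ha (List.ne_nil_of_length_pos (by omega)) fun b f hba hf hcap => ?_
  rw [hba.length_eq, hl] at hcap
  refine hf.exists_stripChain_of_length_three (hba.length_eq.trans hl)
    (fun y hy => h2 y (hba.subset hy)) (by omega) fun y hy => ?_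
  exact hba.sum_eq ▸ hmem y (hba.subset hy)

lemma FullSupportConn.fullEquivClass_of_length_four {a : List ℕ} (h : FullSupportConn a)
    (ha : IsPartition a) (h2 : PartsGE a 2) (hl : a.length = 4) : FullEquivClass a := by
  have hmem : ∀ y ∈ a, 2 * y + 3 ≤ a.sum := by
    obtain ⟨x, y, z, w, rfl⟩ := List.length_eq_four.1 hl
    have hx := h.add_three_le_of_length_four ha h2
    have := ha.1
    simp at this ⊢
    omega
  have hpair : a.Pairwise fun x y => min x y + x + y < a.sum := by
    obtain ⟨x, y, z, w, rfl⟩ := List.length_eq_four.1 hl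
    have hy := h.second_lt_add_of_length_four ha h2
    have := ha.1
    simp at this ⊢
    omega
  refine h.fullEquivClass ha (List.ne_nil_of_length_pos (by omega)) fun b f hba hf hcap => ?_
  rw [hba.length_eq, hl] at hcap
  refine hf.exists_stripChain_of_length_four (hba.length_eq.trans hl)
    (fun y hy => h2 y (hba.subset hy)) (by omega) (fun y hy => ?_) ?_
  · exact hba.sum_eq ▸ hmem y (hba.subset hy)
  · rw [hba.sum_eq, hba.pairwise_iff fun h => by omega]
    exact hpair

/-- Theorem `fullequivschur`: if a partition `a` with parts ≥ 2 and
`ℓ(a) ≥ 3` has full equivalence class then the connected ribbon `R_a` has full Schur support;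
and when `ℓ(a) ≤ 4`, `a` has full equivalence class iff `R_a` has full Schur support. -/
theorem full_equivalence_class_implies_full_support
    (a : List ℕ) (ha : IsPartition a) (h2 : PartsGE a 2) (h3 : 3 ≤ a.length) :
    (FullEquivClass a → FullSupportConn a) ∧
    (a.length ≤ 4 → (FullEquivClass a ↔ FullSupportConn a)) := by
  have hne : a ≠ [] := List.ne_nil_of_length_pos (by omega)
  refine ⟨fullSupportConn_of_fullEquivClass ha h2 hne, fun h4 =>
    ⟨fullSupportConn_of_fullEquivClass ha h2 hne, fun h => ?_⟩⟩
  obtain hl | hl : a.length = 3 ∨ a.length = 4 := by omega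
  · exact h.fullEquivClass_of_length_three ha h2 hl
  · exact h.fullEquivClass_of_length_four ha h2 hl

end RibbonSupport
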